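/- A right-continuous process M = (M_t)_{t ∈ ℝ₊} is a local martingale with respect to 𝔽 if and only if there exist a pair (F, H) satisfying Condition M and a random variable L′ satisfying E(|L′|·1_{γ≤t}) < ∞ for all t ∈ 𝒯 and E[L′ | γ] = 0 a.s., such that, up to P-indistinguishability, M_t = F(t)·1_{t<γ} + (H(γ) + L′)·1_{t≥γ}. -/

import Mathlib

open MeasureTheory Filter Set Topology
open scoped ENNReal NNReal Classical

noncomputable section

namespace SingleJump

variable {Ω : Type*}

/-- The event `{γ > t}`. -/
def jumpSet (γ : Ω → ℝ≥0∞) (t : ℝ≥0) : Set Ω := {ω | (t : ℝ≥0∞) < γ ω}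

/-- The collection `𝒻_t` of the single jump filtration generated by `γ` and the σ-field `m`:
`A ∈ 𝒻_t` iff `A` is `m`-measurable and `A ∩ {γ > t}` is either `∅` or `{γ > t}`. -/
def jumpColl (m : MeasurableSpace Ω) (γ : Ω → ℝ≥0∞) (t : ℝ≥0) : Set (Set Ω) :=
  {A | MeasurableSet[m] A ∧ (A ∩ jumpSet γ t = ∅ ∨ A ∩ jumpSet γ t = jumpSet γ t)}

/-- `𝒻_t` as a σ-field (the collection `jumpColl` generates itself, see Proposition 1(i)). -/
def jumpσ (m : MeasurableSpace Ω) (γ : Ω → ℝ≥0∞) (t : ℝ≥0) : MeasurableSpace Ω :=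
  MeasurableSpace.generateFrom (jumpColl m γ t)

/-- `𝒻_∞ = σ(⋃_{t ∈ ℝ₊} 𝒻_t)`. -/
def jumpσInf (m : MeasurableSpace Ω) (γ : Ω → ℝ≥0∞) : MeasurableSpace Ω :=
  ⨆ t : ℝ≥0, jumpσ m γ t

/-- A real function on `ℝ≥0` is càdlàg: right-continuous everywhere, finite left limits. -/
def Cadlag (f : ℝ≥0 → ℝ) : Prop :=
  (∀ t, ContinuousWithinAt f (Ici t) t) ∧
    ∀ t : ℝ≥0, 0 < t → ∃ c : ℝ, Tendsto f (𝓝[<] t) (𝓝 c)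

/-- The filter of times `t ∈ ℝ≥0` with `t ↑ a` strictly from the left (this is `atTop`
when `a = ∞`). -/
def leftF (a : ℝ≥0∞) : Filter ℝ≥0 := Filter.comap (fun t : ℝ≥0 => (t : ℝ≥0∞)) (𝓝[<] a)

/-- Total variation of `f` over `[0,∞)`, including `|f 0|` (the paper's convention `Var`). -/
def totalVar (f : ℝ≥0 → ℝ) : ℝ≥0∞ := (‖f 0‖₊ : ℝ≥0∞) + eVariationOn f Set.univ

/-- The process `M` stopped at the (possibly infinite) random time `T`. -/
def stopped (M : ℝ≥0 → Ω → ℝ) (T : Ω → ℝ≥0∞) : ℝ≥0 → Ω → ℝ :=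
  fun t ω => M (((t : ℝ≥0∞) ⊓ T ω).toNNReal) ω

section WithMeasurableSpace

variable [m : MeasurableSpace Ω]

/-- `Ḡ(t) = 1 - G(t) = P(γ > t)`. -/
def Gbar (μ : Measure Ω) (γ : Ω → ℝ≥0∞) (t : ℝ≥0) : ℝ :=
  (μ {ω | (t : ℝ≥0∞) < γ ω}).toReal

/-- `Ḡ(t-) = P(γ ≥ t)`, the left-hand limit of `Ḡ` at `t`. -/
def GbarLeft (μ : Measure Ω) (γ : Ω → ℝ≥0∞) (t : ℝ≥0) : ℝ :=
  (μ {ω | (t : ℝ≥0∞) ≤ γ ω}).toReal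

/-- `t_G = sup {t ∈ ℝ₊ : G(t) < 1}`, the right endpoint of the law of `γ`. -/
def tG (μ : Measure Ω) (γ : Ω → ℝ≥0∞) : ℝ≥0∞ :=
  sSup ((fun t : ℝ≥0 => (t : ℝ≥0∞)) '' {t : ℝ≥0 | μ {ω | γ ω ≤ (t : ℝ≥0∞)} < 1})

/-- `𝒯 = {t ∈ ℝ₊ : P(γ ≥ t) > 0}`. -/
def TT (μ : Measure Ω) (γ : Ω → ℝ≥0∞) : Set ℝ≥0 :=
  {t | 0 < μ {ω | (t : ℝ≥0∞) ≤ γ ω}}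

/-- Case A: `P(γ = t_G < ∞) = 0`. -/
def CaseA (μ : Measure Ω) (γ : Ω → ℝ≥0∞) : Prop :=
  μ {ω | γ ω = tG μ γ ∧ tG μ γ < ⊤} = 0

/-- Case B: `P(γ = t_G < ∞) > 0`. -/
def CaseB (μ : Measure Ω) (γ : Ω → ℝ≥0∞) : Prop :=
  0 < μ {ω | γ ω = tG μ γ ∧ tG μ γ < ⊤}

/-- `z ∈ L¹_loc(dG)` : `z` is Borel and `∫_{[0,t]} |z(s)| dG(s) < ∞` for every `t ∈ 𝒯`,
where `dG` is the law of `γ` (a measure on `[0,∞]`). -/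
def MemL1loc (μ : Measure Ω) (γ : Ω → ℝ≥0∞) (z : ℝ≥0 → ℝ) : Prop :=
  Measurable z ∧ ∀ t ∈ TT μ γ,
    IntegrableOn (fun x : ℝ≥0∞ => z x.toNNReal) (Icc 0 (t : ℝ≥0∞)) (μ.map γ)

/-- `F loc≪ G` with density `z = dF/dG` : `F(t) = F(0) + ∫_(0,t] z(s) dG(s)` for `t < t_G`. -/
def LocAC (μ : Measure Ω) (γ : Ω → ℝ≥0∞) (F z : ℝ≥0 → ℝ) : Prop :=
  MemL1loc μ γ z ∧ ∀ t : ℝ≥0, (t : ℝ≥0∞) < tG μ γ →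
    F t = F 0 + ∫ x in Ioc (0 : ℝ≥0∞) (t : ℝ≥0∞), z x.toNNReal ∂(μ.map γ)

/-- Condition M for the pair `(F, H)`. -/
def CondM (μ : Measure Ω) (γ : Ω → ℝ≥0∞) (F H : ℝ≥0 → ℝ) : Prop :=
  (∃ z, LocAC μ γ F z) ∧ MemL1loc μ γ H ∧
  (∀ t : ℝ≥0, (t : ℝ≥0∞) < tG μ γ →
    F t * Gbar μ γ t + ∫ x in Ioc (0 : ℝ≥0∞) (t : ℝ≥0∞), H x.toNNReal ∂(μ.map γ)
      = F 0 * Gbar μ γ 0) ∧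
  (CaseB μ γ → Tendsto F (leftF (tG μ γ)) (𝓝 (H (tG μ γ).toNNReal)))

/-- A stopping time of the single jump filtration: `{T ≤ t} ∈ 𝒻_t` for all `t ∈ ℝ₊`. -/
def IsSJStoppingTime (γ : Ω → ℝ≥0∞) (T : Ω → ℝ≥0∞) : Prop :=
  ∀ t : ℝ≥0, {ω | T ω ≤ (t : ℝ≥0∞)} ∈ jumpColl m γ t

/-- The martingale property on a set `S` of times, w.r.t. the single jump filtration. -/
def MartingaleOn (μ : Measure Ω) (γ : Ω → ℝ≥0∞) (M : ℝ≥0 → Ω → ℝ) (S : Set ℝ≥0) : Prop :=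
  (∀ t ∈ S, Measurable[jumpσ m γ t] (M t)) ∧ (∀ t ∈ S, Integrable (M t) μ) ∧
    ∀ s ∈ S, ∀ t ∈ S, s ≤ t → μ[M t|jumpσ m γ s] =ᵐ[μ] M s

/-- A uniformly integrable martingale w.r.t. the single jump filtration. -/
def UIMartingale (μ : Measure Ω) (γ : Ω → ℝ≥0∞) (M : ℝ≥0 → Ω → ℝ) : Prop :=
  MartingaleOn μ γ M Set.univ ∧ UniformIntegrable M 1 μ

/-- A local martingale w.r.t. the single jump filtration: adapted, a.s. càdlàg paths, and
there are stopping times `T n ↑ ∞` a.s. with each stopped process a UI martingale. -/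
def LocalMartingale (μ : Measure Ω) (γ : Ω → ℝ≥0∞) (M : ℝ≥0 → Ω → ℝ) : Prop :=
  (∀ t : ℝ≥0, Measurable[jumpσ m γ t] (M t)) ∧
  (∀ᵐ ω ∂μ, Cadlag fun t => M t ω) ∧
  ∃ T : ℕ → Ω → ℝ≥0∞,
    (∀ n, IsSJStoppingTime γ (T n)) ∧
    (∀ᵐ ω ∂μ, Monotone (fun n => T n ω) ∧ Tendsto (fun n => T n ω) atTop (𝓝 (⊤ : ℝ≥0∞))) ∧
    ∀ n, UIMartingale μ γ (stopped M (T n))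

/-- `E[L' | γ] = 0` for a (possibly only locally integrable) random variable `L'`. -/
def CondZeroGivenGamma (μ : Measure Ω) (γ : Ω → ℝ≥0∞) (L' : Ω → ℝ) : Prop :=
  ∀ B : Set ℝ≥0∞, MeasurableSet B → IntegrableOn L' (γ ⁻¹' B) μ →
    ∫ ω in γ ⁻¹' B, L' ω ∂μ = 0


end WithMeasurableSpace


/-! ### Analytic lemmas on a finite measure `ν` on `[0,∞]` -/

lemma fub_int (ν : Measure ℝ≥0∞) [IsFiniteMeasure ν] (t : ℝ≥0∞) (u v : ℝ≥0∞ → ℝ)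
    (hu : IntegrableOn u (Ioc 0 t) ν) (hv : IntegrableOn v (Ioc 0 t) ν) :
    Integrable (fun p : ℝ≥0∞ × ℝ≥0∞ => {p : ℝ≥0∞ × ℝ≥0∞ | p.1 ≤ p.2}.indicator
      (fun p => u p.1 * v p.2) p)
      ((ν.restrict (Ioc 0 t)).prod (ν.restrict (Ioc 0 t))) := by
  refine Integrable.indicator (hu.mul_prod hv) ?_
  exact measurableSet_le measurable_fst measurable_snd

lemma fub_left (ν : Measure ℝ≥0∞) (t : ℝ≥0∞) (u v : ℝ≥0∞ → ℝ)
    (y : ℝ≥0∞) (hy : y ∈ Ioc 0 t) :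
    ∫ x in Ioc 0 t, {p : ℝ≥0∞ × ℝ≥0∞ | p.1 ≤ p.2}.indicator
      (fun p => u p.1 * v p.2) (x, y) ∂ν = v y * ∫ x in Ioc 0 y, u x ∂ν := by
  have h1 : ∀ x, {p : ℝ≥0∞ × ℝ≥0∞ | p.1 ≤ p.2}.indicator
      (fun p => u p.1 * v p.2) (x, y) = (Iic y).indicator (fun x => v y * u x) x := by
    intro x
    by_cases h : x ≤ y <;> simp [indicator, h, mul_comm]
  simp_rw [h1]
  rw [integral_indicator measurableSet_Iic, Measure.restrict_restrict measurableSet_Iic,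
    integral_const_mul]
  congr 3
  ext x
  simp only [mem_inter_iff, mem_Iic, mem_Ioc]
  constructor
  · rintro ⟨a, b, c⟩; exact ⟨b, a⟩
  · rintro ⟨a, b⟩; exact ⟨b, a, b.trans hy.2⟩

lemma fub_right (ν : Measure ℝ≥0∞) (t : ℝ≥0∞) (u v : ℝ≥0∞ → ℝ)
    (x : ℝ≥0∞) (hx : x ∈ Ioc 0 t) :
    ∫ y in Ioc 0 t, {p : ℝ≥0∞ × ℝ≥0∞ | p.1 ≤ p.2}.indicator
      (fun p => u p.1 * v p.2) (x, y) ∂ν = u x * ∫ y in Icc x t, v y ∂ν := by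
  have h1 : ∀ y, {p : ℝ≥0∞ × ℝ≥0∞ | p.1 ≤ p.2}.indicator
      (fun p => u p.1 * v p.2) (x, y) = (Ici x).indicator (fun y => u x * v y) y := by
    intro y
    by_cases h : x ≤ y <;> simp [indicator, h]
  simp_rw [h1]
  rw [integral_indicator measurableSet_Ici, Measure.restrict_restrict measurableSet_Ici,
    integral_const_mul]
  congr 3
  ext y
  simp only [mem_inter_iff, mem_Ici, mem_Ioc, mem_Icc]
  constructor
  · rintro ⟨a, b, c⟩; exact ⟨a, c⟩
  · rintro ⟨a, b⟩; exact ⟨a, hx.1.trans_le a, b⟩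

lemma fub_int_left (ν : Measure ℝ≥0∞) [IsFiniteMeasure ν] (t : ℝ≥0∞) (u v : ℝ≥0∞ → ℝ)
    (hu : IntegrableOn u (Ioc 0 t) ν) (hv : IntegrableOn v (Ioc 0 t) ν) :
    IntegrableOn (fun y => v y * ∫ x in Ioc 0 y, u x ∂ν) (Ioc 0 t) ν := by
  have h := (fub_int ν t u v hu hv).integral_prod_right
  refine h.congr ?_
  filter_upwards [ae_restrict_mem measurableSet_Ioc] with y hy
  exact fub_left ν t u v y hy

lemma fub_int_right (ν : Measure ℝ≥0∞) [IsFiniteMeasure ν] (t : ℝ≥0∞) (u v : ℝ≥0∞ → ℝ)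
    (hu : IntegrableOn u (Ioc 0 t) ν) (hv : IntegrableOn v (Ioc 0 t) ν) :
    IntegrableOn (fun x => u x * ∫ y in Icc x t, v y ∂ν) (Ioc 0 t) ν := by
  have h := (fub_int ν t u v hu hv).integral_prod_left
  refine h.congr ?_
  filter_upwards [ae_restrict_mem measurableSet_Ioc] with y hy
  exact fub_right ν t u v y hy

lemma fub_swap (ν : Measure ℝ≥0∞) [IsFiniteMeasure ν] (t : ℝ≥0∞) (u v : ℝ≥0∞ → ℝ)
    (hu : IntegrableOn u (Ioc 0 t) ν) (hv : IntegrableOn v (Ioc 0 t) ν) :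
    ∫ y in Ioc 0 t, v y * ∫ x in Ioc 0 y, u x ∂ν ∂ν
      = ∫ x in Ioc 0 t, u x * ∫ y in Icc x t, v y ∂ν ∂ν := by
  have h := integral_integral_swap (μ := ν.restrict (Ioc 0 t)) (ν := ν.restrict (Ioc 0 t))
    (f := fun x y => {p : ℝ≥0∞ × ℝ≥0∞ | p.1 ≤ p.2}.indicator
      (fun p => u p.1 * v p.2) (x, y)) (fub_int ν t u v hu hv)
  rw [setIntegral_congr_fun measurableSet_Ioc (fun y hy => (fub_left ν t u v y hy).symm),
    setIntegral_congr_fun measurableSet_Ioc (fun y hy => (fub_right ν t u v y hy).symm)]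
  exact h.symm

/-- Uniqueness for the homogeneous Stieltjes equation. -/
lemma gronwall_zero (ν : Measure ℝ≥0∞) [IsFiniteMeasure ν] (t : ℝ≥0∞) (D : ℝ≥0∞ → ℝ)
    (hD : IntegrableOn D (Ioc 0 t) ν)
    (hI : ∀ s ≤ t, ∫ x in Ioc 0 s, D x ∂ν = - (ν.real (Ioi s) * D s)) :
    ∫ x in Ioc 0 t, D x ∂ν = 0 := by
  set I := ∫ x in Ioc 0 t, D x ∂ν with hIdef
  set J := ∫ y in Ioc 0 t, D y * ∫ x in Ioc 0 y, D x ∂ν ∂ν with hJ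
  have hJle : J ≤ 0 := by
    refine setIntegral_nonpos measurableSet_Ioc fun y hy => ?_
    rw [hI y hy.2]
    have : 0 ≤ ν.real (Ioi y) := measureReal_nonneg
    nlinarith [mul_self_nonneg (D y), mul_nonneg this (mul_self_nonneg (D y))]
  have hswap := fub_swap ν t D D hD hD
  have hJge : I * I - J ≤ J := by
    have e1 : I * I - J = ∫ x in Ioc 0 t, (D x * I - D x * ∫ y in Ioc 0 x, D y ∂ν) ∂ν := by
      rw [integral_sub (hD.mul_const I) (fub_int_left ν t D D hD hD), integral_mul_const]
    rw [e1, hJ, hswap]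
    refine setIntegral_mono_on ((hD.mul_const I).sub (fub_int_left ν t D D hD hD))
      (fub_int_right ν t D D hD hD) measurableSet_Ioc fun x hx => ?_
    have hxt := hx.2
    have hs1 : I = (∫ y in Ioc 0 x, D y ∂ν) + ∫ y in Ioc x t, D y ∂ν := by
      rw [hIdef, ← setIntegral_union (Ioc_disjoint_Ioc_of_le le_rfl) measurableSet_Ioc
        (hD.mono_set (Ioc_subset_Ioc_right hxt)) (hD.mono_set (Ioc_subset_Ioc_left zero_le)),
        Ioc_union_Ioc_eq_Ioc zero_le hxt]
    have hs2 : ∫ y in Icc x t, D y ∂ν = ν.real {x} * D x + ∫ y in Ioc x t, D y ∂ν := by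
      have : Icc x t = {x} ∪ Ioc x t := by
        rw [← Icc_self, Icc_union_Ioc_eq_Icc le_rfl hxt]
      rw [this, setIntegral_union (by simp) measurableSet_Ioc
        (by simp) (hD.mono_set (Ioc_subset_Ioc_left zero_le))]
      simp [Measure.real]
    rw [hs2, hs1]
    have : 0 ≤ ν.real {x} := measureReal_nonneg
    nlinarith [mul_nonneg this (mul_self_nonneg (D x))]
  nlinarith [mul_self_nonneg I]

lemma ac_lemma (ν : Measure ℝ≥0∞) [IsFiniteMeasure ν] (t : ℝ≥0∞) (f h z : ℝ≥0∞ → ℝ)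
    (hf : IntegrableOn f (Ioc 0 t) ν) (hh : IntegrableOn h (Ioc 0 t) ν)
    (hz : IntegrableOn z (Ioc 0 t) ν)
    (hzf : ∀ x ∈ Ioc 0 t, z x * ν.real (Ici x) = f x - h x)
    (heq : ∀ s ≤ t, f s * ν.real (Ioi s) + ∫ x in Ioc 0 s, h x ∂ν = f 0 * ν.real (Ioi 0))
    (hg : 0 < ν.real (Ioi t)) :
    f t = f 0 + ∫ x in Ioc 0 t, z x ∂ν := by
  set Z : ℝ≥0∞ → ℝ := fun s => f 0 + ∫ x in Ioc 0 s, z x ∂ν with hZ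
  have h1 : ∀ s, IntegrableOn (fun _ : ℝ≥0∞ => (1 : ℝ)) (Ioc 0 s) ν := fun s => by simp
  have hZint : IntegrableOn Z (Ioc 0 t) ν := by
    have := fub_int_left ν t z (fun _ => 1) hz (h1 t)
    simp only [one_mul] at this
    exact (integrable_const (f 0)).add this
  have key : ∀ s ≤ t, ∫ x in Ioc 0 s, (Z x - f x) ∂ν = - (ν.real (Ioi s) * (Z s - f s)) := by
    intro s hs
    have sub : Ioc 0 s ⊆ Ioc 0 t := Ioc_subset_Ioc_right hs
    have hzs := hz.mono_set sub
    have a1 : ∫ x in Ioc 0 s, Z x ∂ν = f 0 * ν.real (Ioc 0 s)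
        + ∫ x in Ioc 0 s, z x * ν.real (Icc x s) ∂ν := by
      have := fub_swap ν s z (fun _ => 1) hzs (h1 s)
      have hi := fub_int_left ν s z (fun _ => 1) hzs (h1 s)
      simp only [one_mul] at this hi
      simp only [hZ]
      rw [integral_add (integrable_const _) hi, this]
      simp [mul_comm]
    have a2 : ∫ x in Ioc 0 s, z x * ν.real (Icc x s) ∂ν
        = ∫ x in Ioc 0 s, ((f x - h x) - z x * ν.real (Ioi s)) ∂ν := by
      refine setIntegral_congr_fun measurableSet_Ioc fun x hx => ?_
      have : ν.real (Ici x) = ν.real (Icc x s) + ν.real (Ioi s) := by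
        rw [← measureReal_union _ measurableSet_Ioi, Icc_union_Ioi_eq_Ici hx.2]
        exact disjoint_left.2 fun a ha hb => absurd ha.2 (not_le.2 hb)
      rw [← hzf x (sub hx), this]; ring
    have a3 : ν.real (Ioi 0) = ν.real (Ioc 0 s) + ν.real (Ioi s) := by
      rw [← measureReal_union _ measurableSet_Ioi, Ioc_union_Ioi_eq_Ioi zero_le]
      exact disjoint_left.2 fun a ha hb => absurd ha.2 (not_le.2 hb)
    have hfs := hf.mono_set sub
    have hhs := hh.mono_set sub
    rw [integral_sub (hZint.mono_set sub) hfs, a1, a2,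
      integral_sub (f := fun x => f x - h x) (hfs.sub hhs) (hzs.mul_const _),
      integral_sub hfs hhs, integral_mul_const]
    have := heq s hs
    rw [a3] at this
    simp only [hZ]
    linarith
  have := gronwall_zero ν t (fun x => Z x - f x) (hZint.sub hf) key
  rw [key t le_rfl] at this
  have h3 : Z t - f t = 0 := by
    rcases mul_eq_zero.1 (neg_eq_zero.1 this) with h | h
    · exact absurd h hg.ne'
    · exact h
  simp only [hZ] at h3
  linarith


/-! ### The single jump filtration -/

section Basics

variable [m : MeasurableSpace Ω]

lemma measurableSet_jumpσ (γ : Ω → ℝ≥0∞) (t : ℝ≥0) (A : Set Ω) :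
    MeasurableSet[jumpσ m γ t] A ↔ A ∈ jumpColl m γ t := by
  constructor
  · intro h
    induction A, h using MeasurableSpace.generateFrom_induction with
    | hC A hA => exact hA
    | empty => exact ⟨MeasurableSet.empty, Or.inl (by simp)⟩
    | compl A _ ih =>
      refine ⟨ih.1.compl, ?_⟩
      rcases ih.2 with h | h
      · right
        rw [inter_eq_right]
        intro x hx hA
        exact (h ▸ (⟨hA, hx⟩ : x ∈ A ∩ jumpSet γ t) : x ∈ (∅ : Set Ω))
      · left
        rw [inter_eq_right] at h
        ext x
        simp only [mem_inter_iff, mem_compl_iff, mem_empty_iff_false, iff_false, not_and]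
        exact fun hx hx' => hx (h hx')
    | iUnion f _ ih =>
      refine ⟨MeasurableSet.iUnion fun n => (ih n).1, ?_⟩
      by_cases hex : ∃ n, f n ∩ jumpSet γ t = jumpSet γ t
      · right
        obtain ⟨n, hn⟩ := hex
        rw [inter_eq_right] at hn ⊢
        exact hn.trans (subset_iUnion f n)
      · left
        push Not at hex
        rw [iUnion_inter]
        simp only [iUnion_eq_empty]
        intro n
        exact (ih n).2.resolve_right (hex n)
  · intro h
    exact MeasurableSpace.measurableSet_generateFrom h

lemma jumpσ_le (γ : Ω → ℝ≥0∞) (t : ℝ≥0) : jumpσ m γ t ≤ m := by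
  intro A hA
  exact ((measurableSet_jumpσ γ t A).1 hA).1

lemma jumpσ_mono (γ : Ω → ℝ≥0∞) {s t : ℝ≥0} (hst : s ≤ t) : jumpσ m γ s ≤ jumpσ m γ t := by
  intro A hA
  have hA := (measurableSet_jumpσ γ s A).1 hA
  refine (measurableSet_jumpσ γ t A).2 ⟨hA.1, ?_⟩
  have hsub : jumpSet γ t ⊆ jumpSet γ s := by
    intro ω hω
    have hω' : (t : ℝ≥0∞) < γ ω := hω
    have hst' : (s : ℝ≥0∞) ≤ t := by exact_mod_cast hst
    exact lt_of_le_of_lt hst' hω'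
  rcases hA.2 with h | h
  · left
    refine subset_empty_iff.1 ?_
    rw [← h]
    exact inter_subset_inter_right _ hsub
  · right
    rw [inter_eq_right] at h ⊢
    exact hsub.trans h

lemma const_on_jumpSet (γ : Ω → ℝ≥0∞) (t : ℝ≥0) (f : Ω → ℝ)
    (hf : Measurable[jumpσ m γ t] f) {ω ω' : Ω} (hω : (t : ℝ≥0∞) < γ ω)
    (hω' : (t : ℝ≥0∞) < γ ω') : f ω = f ω' := by
  have hA := (measurableSet_jumpσ γ t _).1 (hf (measurableSet_singleton (f ω)))
  rcases hA.2 with h | h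
  · exact absurd (h ▸ (⟨rfl, hω⟩ : ω ∈ f ⁻¹' {f ω} ∩ jumpSet γ t) : ω ∈ (∅ : Set Ω)) (by simp)
  · rw [inter_eq_right] at h
    exact (h hω' : f ω' = f ω).symm

lemma gt_mem_jumpσ (γ : Ω → ℝ≥0∞) (hγ : Measurable γ) (t : ℝ≥0) :
    MeasurableSet[jumpσ m γ t] {ω | (t : ℝ≥0∞) < γ ω} := by
  refine (measurableSet_jumpσ γ t _).2 ⟨hγ measurableSet_Ioi, Or.inr ?_⟩
  exact inter_self _

lemma le_mem_jumpσ (γ : Ω → ℝ≥0∞) (hγ : Measurable γ) (t : ℝ≥0) :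
    MeasurableSet[jumpσ m γ t] {ω | γ ω ≤ (t : ℝ≥0∞)} := by
  have := (gt_mem_jumpσ γ hγ t).compl
  convert this using 1
  ext ω; simp

variable (μ : Measure Ω) [IsProbabilityMeasure μ] (γ : Ω → ℝ≥0∞)

lemma le_lt_one_iff (hγ : Measurable γ) (t : ℝ≥0∞) :
    μ {ω | γ ω ≤ t} < 1 ↔ 0 < μ {ω | t < γ ω} := by
  have h : {ω | t < γ ω} = {ω | γ ω ≤ t}ᶜ := by ext; simp
  have hm : MeasurableSet {ω | γ ω ≤ t} := hγ measurableSet_Iic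
  rw [h, prob_compl_eq_one_sub hm, tsub_pos_iff_lt]

lemma pos_of_lt_tG (hγ : Measurable γ) {t : ℝ≥0∞} (ht : t < tG μ γ) :
    0 < μ {ω | t < γ ω} := by
  rw [tG, lt_sSup_iff] at ht
  obtain ⟨_, ⟨s, hs, rfl⟩, hts⟩ := ht
  have := (le_lt_one_iff μ γ hγ s).1 hs
  refine this.trans_le (measure_mono fun ω hω => ?_)
  exact lt_trans hts hω

lemma null_gt_tG (hγ : Measurable γ) : μ {ω | tG μ γ < γ ω} = 0 := by
  by_cases htop : tG μ γ = ⊤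
  · simp [htop]
  obtain ⟨u, -, hu, hlim⟩ := exists_seq_strictAnti_tendsto' (lt_top_iff_ne_top.2 htop)
  have hsub : {ω | tG μ γ < γ ω} ⊆ ⋃ n, {ω | u n < γ ω} := by
    intro ω hω
    obtain ⟨n, hn⟩ := (hlim.eventually_lt_const (hω : tG μ γ < γ ω)).exists
    exact mem_iUnion.2 ⟨n, hn⟩
  refine measure_mono_null hsub (measure_iUnion_null fun n => ?_)
  by_contra hne
  have hpos := pos_iff_ne_zero.2 hne
  have huf : u n ≠ ⊤ := (hu n).2.ne
  have : u n ≤ tG μ γ := by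
    refine le_sSup ⟨(u n).toNNReal, ?_, ENNReal.coe_toNNReal huf⟩
    have := (le_lt_one_iff μ γ hγ (u n)).2 hpos
    simpa [ENNReal.coe_toNNReal huf] using this
  exact absurd (hu n).1 (not_lt.2 this)

lemma mem_TT_of_lt (hγ : Measurable γ) {t : ℝ≥0} (ht : (t : ℝ≥0∞) < tG μ γ) : t ∈ TT μ γ :=
  (pos_of_lt_tG μ γ hγ ht).trans_le (measure_mono fun ω hω => by
    have hω' : (t : ℝ≥0∞) < γ ω := hω
    exact hω'.le)

lemma TT_cases (hγ : Measurable γ) {t : ℝ≥0} (ht : t ∈ TT μ γ) :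
    (t : ℝ≥0∞) < tG μ γ ∨ ((t : ℝ≥0∞) = tG μ γ ∧ CaseB μ γ) := by
  rcases lt_trichotomy (t : ℝ≥0∞) (tG μ γ) with h | h | h
  · exact Or.inl h
  · refine Or.inr ⟨h, ?_⟩
    by_contra hB
    have hB : μ {ω | γ ω = tG μ γ ∧ tG μ γ < ⊤} = 0 := by
      simpa [CaseB] using hB
    have h2 : μ {ω | (t : ℝ≥0∞) ≤ γ ω} = 0 := by
      refine measure_mono_null (t := {ω | tG μ γ < γ ω} ∪ {ω | γ ω = tG μ γ ∧ tG μ γ < ⊤}) ?_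
        (measure_union_null (null_gt_tG μ γ hγ) hB)
      intro ω hω
      have hω' : (t : ℝ≥0∞) ≤ γ ω := hω
      rcases hω'.lt_or_eq with h' | h'
      · left; rw [h] at h'; exact h'
      · right; exact ⟨by rw [← h', h], by rw [← h]; exact ENNReal.coe_lt_top⟩
    exact absurd h2 (ne_of_gt ht)
  · exfalso
    have : μ {ω | (t : ℝ≥0∞) ≤ γ ω} = 0 :=
      measure_mono_null (fun ω hω => lt_of_lt_of_le h hω) (null_gt_tG μ γ hγ)
    exact absurd this (ne_of_gt ht)

lemma mem_TT_of_caseB (hB : CaseB μ γ) {t : ℝ≥0} (ht : (t : ℝ≥0∞) = tG μ γ) : t ∈ TT μ γ :=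
  lt_of_lt_of_le hB (measure_mono fun ω hω => by
    have := hω.1
    show (t : ℝ≥0∞) ≤ γ ω
    rw [this, ht])

lemma TT_down {s t : ℝ≥0} (hst : s ≤ t) (ht : t ∈ TT μ γ) : s ∈ TT μ γ :=
  lt_of_lt_of_le ht (measure_mono fun ω hω => by
    have hω' : (t : ℝ≥0∞) ≤ γ ω := hω
    have hst' : (s : ℝ≥0∞) ≤ t := by exact_mod_cast hst
    exact hst'.trans hω')

lemma TT_le_tG (hγ : Measurable γ) {t : ℝ≥0} (ht : t ∈ TT μ γ) : (t : ℝ≥0∞) ≤ tG μ γ := by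
  rcases TT_cases μ γ hγ ht with h | h
  · exact h.le
  · exact h.1.le

lemma tG_pos (hγ : Measurable γ) (hpos : 0 < μ {ω | 0 < γ ω}) : 0 < tG μ γ := by
  by_contra h
  have h0 : tG μ γ = 0 := by simpa using h
  have := null_gt_tG μ γ hγ
  rw [h0] at this
  exact absurd this hpos.ne'

lemma ae_mem_TT (hγ : Measurable γ) : ∀ᵐ ω ∂μ, ∀ t : ℝ≥0, (t : ℝ≥0∞) ≤ γ ω → t ∈ TT μ γ := by
  have h1 : ∀ᵐ ω ∂μ, γ ω ≤ tG μ γ := by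
    have := null_gt_tG μ γ hγ
    rw [ae_iff]; simpa using this
  have h2 : ∀ᵐ ω ∂μ, (γ ω = tG μ γ ∧ tG μ γ < ⊤) → CaseB μ γ := by
    by_cases hB : CaseB μ γ
    · simp [hB]
    · have hB' : μ {ω | γ ω = tG μ γ ∧ tG μ γ < ⊤} = 0 := by
        simpa [CaseB] using hB
      rw [ae_iff]
      simpa only [hB, imp_false, not_not] using hB'
  filter_upwards [h1, h2] with ω h1 h2 t ht
  rcases (ht.trans h1).lt_or_eq with h | h
  · exact mem_TT_of_lt μ γ hγ h
  · refine mem_TT_of_caseB μ γ (h2 ⟨le_antisymm h1 (h ▸ ht), ?_⟩) h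
    rw [← h]; exact ENNReal.coe_lt_top

lemma exists_TT_seq (hγ : Measurable γ) (hpos : 0 < μ {ω | 0 < γ ω}) :
    ∃ τ : ℕ → ℝ≥0, Monotone τ ∧ (∀ n, τ n ∈ TT μ γ) ∧ (∀ t ∈ TT μ γ, ∃ n, t ≤ τ n) ∧
      (tG μ γ = ⊤ → Tendsto (fun n => (τ n : ℝ≥0∞)) atTop (𝓝 ⊤)) := by
  by_cases hB : CaseB μ γ
  · have hfin : tG μ γ ≠ ⊤ := by
      intro h
      simp [CaseB, h] at hB
    refine ⟨fun _ => (tG μ γ).toNNReal, monotone_const, fun _ => ?_, fun t ht => ⟨0, ?_⟩,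
      fun h => absurd h hfin⟩
    · exact mem_TT_of_caseB μ γ hB (ENNReal.coe_toNNReal hfin)
    · have := TT_le_tG μ γ hγ ht
      rw [← ENNReal.coe_toNNReal hfin] at this
      exact_mod_cast this
  · obtain ⟨u, hmono, hu, hlim⟩ := exists_seq_strictMono_tendsto' (tG_pos μ γ hγ hpos)
    have hfin : ∀ n, u n ≠ ⊤ := fun n => ((hu n).2.trans_le le_top).ne
    have hc : ∀ n, ((u n).toNNReal : ℝ≥0∞) = u n := fun n => ENNReal.coe_toNNReal (hfin n)
    refine ⟨fun n => (u n).toNNReal, ?_, fun n => ?_, fun t ht => ?_, fun h => ?_⟩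
    · intro a b hab
      exact ENNReal.toNNReal_mono (hfin b) (hmono.monotone hab)
    · exact mem_TT_of_lt μ γ hγ (by rw [hc]; exact (hu n).2)
    · have hlt : (t : ℝ≥0∞) < tG μ γ := by
        rcases TT_cases μ γ hγ ht with h | h
        · exact h
        · exact absurd h.2 hB
      obtain ⟨n, hn⟩ := (hlim.eventually_const_lt hlt).exists
      refine ⟨n, ?_⟩
      have := hn.le
      rw [← hc] at this
      exact_mod_cast this
    · simp only [hc]
      rw [h] at hlim
      exact hlim

/-- `Ḡ` through the law of `γ`. -/
lemma Gbar_eq (hγ : Measurable γ) (t : ℝ≥0) : Gbar μ γ t = (μ.map γ).real (Ioi (t : ℝ≥0∞)) := by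
  rw [Gbar, Measure.real, Measure.map_apply hγ measurableSet_Ioi]
  rfl

end Basics


/-! ### Left limits and the conditions at the right end point -/

lemma tendsto_Ioc_left (ν : Measure ℝ≥0∞) (t : ℝ≥0∞) (h : ℝ≥0∞ → ℝ)
    (hh : IntegrableOn h (Ioo 0 t) ν) :
    Tendsto (fun u : ℝ≥0∞ => ∫ x in Ioc 0 u, h x ∂ν) (𝓝[<] t) (𝓝 (∫ x in Ioo 0 t, h x ∂ν)) := by
  have h1 : Tendsto (fun u : ℝ≥0∞ => ∫ x in Ioo 0 t, (Iic u).indicator h x ∂ν) (𝓝[<] t)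
      (𝓝 (∫ x in Ioo 0 t, h x ∂ν)) := by
    refine tendsto_integral_filter_of_dominated_convergence (fun x => ‖h x‖) ?_ ?_ hh.norm ?_
    · exact Eventually.of_forall fun u => hh.aestronglyMeasurable.indicator measurableSet_Iic
    · exact Eventually.of_forall fun u => Eventually.of_forall fun x =>
        norm_indicator_le_norm_self _ _
    · filter_upwards [ae_restrict_mem measurableSet_Ioo] with x hx
      refine tendsto_const_nhds.congr' ?_
      have : ∀ᶠ u in 𝓝[<] t, x < u := mem_nhdsWithin_of_mem_nhds (lt_mem_nhds hx.2)
      filter_upwards [this] with u hu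
      rw [indicator_of_mem (show x ∈ Iic u from hu.le)]
  refine h1.congr' ?_
  filter_upwards [self_mem_nhdsWithin] with u hu
  rw [integral_indicator measurableSet_Iic, Measure.restrict_restrict measurableSet_Iic]
  congr 2
  ext x
  simp only [mem_inter_iff, mem_Iic, mem_Ioc, mem_Ioo]
  constructor
  · rintro ⟨a, b, c⟩; exact ⟨b, a⟩
  · rintro ⟨a, b⟩; exact ⟨b, a, lt_of_le_of_lt b hu⟩

lemma leftF_neBot {t : ℝ≥0∞} (ht : 0 < t) : (leftF t).NeBot := by
  rw [leftF, comap_neBot_iff_frequently]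
  have : (𝓝[<] t).NeBot := nhdsLT_neBot_of_exists_lt ⟨0, ht⟩
  refine Eventually.frequently ?_
  filter_upwards [self_mem_nhdsWithin] with u hu
  exact ⟨u.toNNReal, ENNReal.coe_toNNReal (lt_of_lt_of_le (hu : u < t) le_top).ne⟩

lemma tendsto_coe_leftF (t : ℝ≥0∞) : Tendsto (fun u : ℝ≥0 => (u : ℝ≥0∞)) (leftF t) (𝓝[<] t) :=
  tendsto_comap

lemma eventually_lt_leftF (t : ℝ≥0∞) : ∀ᶠ u in leftF t, ((u : ℝ≥0) : ℝ≥0∞) < t :=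
  (tendsto_coe_leftF t).eventually self_mem_nhdsWithin

lemma tendsto_tail_left (ν : Measure ℝ≥0∞) [IsFiniteMeasure ν] {t : ℝ≥0∞} (ht : 0 < t) :
    Tendsto (fun u : ℝ≥0∞ => ν.real (Ioi u)) (𝓝[<] t) (𝓝 (ν.real (Ici t))) := by
  have h := tendsto_Ioc_left ν t (fun _ => (1 : ℝ)) (by simp)
  have e1 : ν.real (Ici t) = ν.real (Ioi 0) - ∫ x in Ioo 0 t, (1 : ℝ) ∂ν := by
    have : ν.real (Ioi 0) = ν.real (Ioo 0 t) + ν.real (Ici t) := by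
      rw [← measureReal_union _ measurableSet_Ici, Ioo_union_Ici_eq_Ioi ht]
      exact disjoint_left.2 fun a ha hb => absurd ha.2 (not_lt.2 hb)
    simp [this]
  rw [e1]
  refine (h.const_sub (ν.real (Ioi 0))).congr fun u => ?_
  have : ν.real (Ioi 0) = ν.real (Ioc 0 u) + ν.real (Ioi u) := by
    rw [← measureReal_union _ measurableSet_Ioi, Ioc_union_Ioi_eq_Ioi zero_le]
    exact disjoint_left.2 fun a ha hb => absurd ha.2 (not_le.2 hb)
  simp [this]

lemma endpoint_iff (ν : Measure ℝ≥0∞) [IsFiniteMeasure ν] {t : ℝ≥0∞} (ht : 0 < t)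
    (h : ℝ≥0∞ → ℝ) (hh : IntegrableOn h (Ioc 0 t) ν) (hp : 0 < ν.real (Ici t))
    (h0 : ν.real (Ioi t) = 0) (F : ℝ≥0 → ℝ) (C : ℝ)
    (heq : ∀ u : ℝ≥0, (u : ℝ≥0∞) < t →
      F u * ν.real (Ioi (u : ℝ≥0∞)) + ∫ x in Ioc 0 (u : ℝ≥0∞), h x ∂ν = C) :
    Tendsto F (leftF t) (𝓝 (h t)) ↔ ∫ x in Ioc 0 t, h x ∂ν = C := by
  have hne := leftF_neBot ht
  have hI := (tendsto_Ioc_left ν t h (hh.mono_set Ioo_subset_Ioc_self)).comp (tendsto_coe_leftF t)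
  have hG := (tendsto_tail_left ν ht).comp (tendsto_coe_leftF t)
  have hsing : ν.real {t} = ν.real (Ici t) := by
    have : Ici t = {t} ∪ Ioi t := by
      ext x; simp [le_iff_eq_or_lt]
    rw [this, measureReal_union (by simp) measurableSet_Ioi, h0, add_zero]
  have hsplit : ∫ x in Ioc 0 t, h x ∂ν = ∫ x in Ioo 0 t, h x ∂ν + ν.real (Ici t) * h t := by
    have : Ioc 0 t = Ioo 0 t ∪ {t} := by
      rw [← Icc_self, Ioo_union_Icc_eq_Ioc ht le_rfl]
    rw [this, setIntegral_union (by simp) (measurableSet_singleton t)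
      (hh.mono_set Ioo_subset_Ioc_self) (by simp), ← hsing]
    simp [Measure.real]
  constructor
  · intro hF
    have h1 := (hF.mul hG).add hI
    have h2 : Tendsto (fun _ : ℝ≥0 => C) (leftF t)
        (𝓝 (h t * ν.real (Ici t) + ∫ x in Ioo 0 t, h x ∂ν)) := by
      refine h1.congr' ?_
      filter_upwards [eventually_lt_leftF t] with u hu
      exact heq u hu
    have := tendsto_nhds_unique h2 tendsto_const_nhds
    rw [hsplit]; linarith
  · intro hC
    have h1 := (hI.const_sub C).div hG hp.ne'
    have e : (C - ∫ x in Ioo 0 t, h x ∂ν) / ν.real (Ici t) = h t := by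
      rw [← hC, hsplit]; field_simp; ring
    rw [e] at h1
    refine h1.congr' ?_
    filter_upwards [eventually_lt_leftF t] with u hu
    have := heq u hu
    have hpos : 0 < ν.real (Ioi (u : ℝ≥0∞)) :=
      hp.trans_le (measureReal_mono fun x hx => lt_of_lt_of_le hu hx)
    simp only [Pi.div_apply, Function.comp]
    rw [← this]; field_simp; ring

section LocAC

lemma toNNReal_le_of_le_coe {x : ℝ≥0∞} {T : ℝ≥0} (h : x ≤ T) : x.toNNReal ≤ T := by
  simpa using ENNReal.toNNReal_mono ENNReal.coe_ne_top h

variable [m : MeasurableSpace Ω] (μ : Measure Ω) [IsProbabilityMeasure μ] (γ : Ω → ℝ≥0∞)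

lemma law_setIntegral (hγ : Measurable γ) {H : ℝ≥0 → ℝ} (hH : Measurable H) {S : Set ℝ≥0∞}
    (hS : MeasurableSet S) :
    ∫ x in S, H x.toNNReal ∂(μ.map γ) = ∫ ω in γ ⁻¹' S, H (γ ω).toNNReal ∂μ :=
  setIntegral_map hS (hH.comp ENNReal.measurable_toNNReal).aestronglyMeasurable hγ.aemeasurable

lemma law_integrableOn (hγ : Measurable γ) {H : ℝ≥0 → ℝ} (hH : Measurable H) {S : Set ℝ≥0∞}
    (hS : MeasurableSet S) :
    IntegrableOn (fun x : ℝ≥0∞ => H x.toNNReal) S (μ.map γ) ↔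
      IntegrableOn (fun ω => H (γ ω).toNNReal) (γ ⁻¹' S) μ := by
  rw [IntegrableOn, Measure.restrict_map hγ hS, integrable_map_measure (f := γ)
    (g := fun x : ℝ≥0∞ => H x.toNNReal) (hH.comp ENNReal.measurable_toNNReal).aestronglyMeasurable hγ.aemeasurable]
  rfl

lemma measurable_Ioc_integral (ν : Measure ℝ≥0∞) [IsFiniteMeasure ν] {h : ℝ≥0∞ → ℝ}
    (hh : Measurable h) :
    Measurable (fun s : ℝ≥0 => ∫ x in Ioc 0 (s : ℝ≥0∞), h x ∂ν) := by
  have h1 : StronglyMeasurable (Function.uncurry (fun (s : ℝ≥0) (x : ℝ≥0∞) =>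
      {p : ℝ≥0 × ℝ≥0∞ | 0 < p.2 ∧ p.2 ≤ (p.1 : ℝ≥0∞)}.indicator (fun p => h p.2) (s, x))) := by
    refine Measurable.stronglyMeasurable ?_
    refine Measurable.indicator (hh.comp measurable_snd) ?_
    exact (measurableSet_lt measurable_const measurable_snd).inter
      (measurableSet_le measurable_snd (ENNReal.continuous_coe.measurable.comp measurable_fst))
  have h2 := (h1.integral_prod_right (ν := ν)).measurable
  convert h2 using 2 with s
  rw [← integral_indicator measurableSet_Ioc]
  congr 1

lemma exists_LocAC (hγ : Measurable γ) (F H : ℝ≥0 → ℝ) (hH : MemL1loc μ γ H)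
    (heq : ∀ t : ℝ≥0, (t : ℝ≥0∞) < tG μ γ →
      F t * Gbar μ γ t + ∫ x in Ioc (0 : ℝ≥0∞) (t : ℝ≥0∞), H x.toNNReal ∂(μ.map γ)
        = F 0 * Gbar μ γ 0) : ∃ z, LocAC μ γ F z := by
  set ν := μ.map γ with hν
  have : IsProbabilityMeasure ν := Measure.isProbabilityMeasure_map hγ.aemeasurable
  set h : ℝ≥0∞ → ℝ := fun x => H x.toNNReal with hh
  have hhm : Measurable h := hH.1.comp ENNReal.measurable_toNNReal
  simp_rw [Gbar_eq μ γ hγ, ← hν] at heq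
  set C := F 0 * ν.real (Ioi ((0 : ℝ≥0) : ℝ≥0∞)) with hC
  have hGm : Measurable (fun s : ℝ≥0 => ν.real (Ioi (s : ℝ≥0∞))) := by
    refine Antitone.measurable fun a b hab => measureReal_mono (Ioi_subset_Ioi ?_)
    exact_mod_cast hab
  have hGlm : Measurable (fun s : ℝ≥0 => ν.real (Ici (s : ℝ≥0∞))) := by
    refine Antitone.measurable fun a b hab => measureReal_mono (Ici_subset_Ici.2 ?_)
    exact_mod_cast hab
  have hlt : MeasurableSet {s : ℝ≥0 | (s : ℝ≥0∞) < tG μ γ} :=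
    measurableSet_lt ENNReal.continuous_coe.measurable measurable_const
  set f : ℝ≥0 → ℝ := fun s => if (s : ℝ≥0∞) < tG μ γ then
    (C - ∫ x in Ioc 0 (s : ℝ≥0∞), h x ∂ν) / ν.real (Ioi (s : ℝ≥0∞)) else 0 with hf
  have hfm : Measurable f := by
    refine Measurable.ite hlt ?_ measurable_const
    exact ((measurable_const.sub (measurable_Ioc_integral ν hhm)).div hGm)
  have hpos : ∀ s : ℝ≥0, (s : ℝ≥0∞) < tG μ γ → 0 < ν.real (Ioi (s : ℝ≥0∞)) := by
    intro s hs
    have := pos_of_lt_tG μ γ hγ hs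
    rw [Measure.real, hν, Measure.map_apply hγ measurableSet_Ioi]
    exact ENNReal.toReal_pos this.ne' (measure_ne_top _ _)
  have hlpos : ∀ s : ℝ≥0, s ∈ TT μ γ → 0 < ν.real (Ici (s : ℝ≥0∞)) := by
    intro s hs
    rw [Measure.real, hν, Measure.map_apply hγ measurableSet_Ici]
    exact ENNReal.toReal_pos (ne_of_gt hs) (measure_ne_top _ _)
  have hFf : ∀ s : ℝ≥0, (s : ℝ≥0∞) < tG μ γ → F s = f s := by
    intro s hs
    have := heq s hs
    have hp := hpos s hs
    simp only [hf, hs, if_true]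
    rw [eq_div_iff hp.ne']
    linarith
  set z : ℝ≥0 → ℝ := fun s => if (s : ℝ≥0∞) < tG μ γ then
    (f s - H s) / ν.real (Ici (s : ℝ≥0∞)) else 0 with hz
  have hzm : Measurable z :=
    Measurable.ite hlt ((hfm.sub hH.1).div hGlm) measurable_const
  have hbd : ∀ T ∈ TT μ γ, ∃ K, ∀ s ≤ T, |f s| ≤ K := by
    intro T hT
    obtain ⟨c, hc0, hc⟩ : ∃ c, 0 < c ∧ ∀ s ≤ T, (s : ℝ≥0∞) < tG μ γ →
        c ≤ ν.real (Ioi (s : ℝ≥0∞)) := by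
      rcases TT_cases μ γ hγ hT with h | h
      · refine ⟨_, hpos T h, fun s hs _ => measureReal_mono (Ioi_subset_Ioi ?_)⟩
        exact_mod_cast hs
      · refine ⟨_, hlpos T hT, fun s hs hs' => measureReal_mono fun x hx => ?_⟩
        rw [← h.1] at hs'
        exact lt_of_lt_of_le hs' hx
    refine ⟨(|C| + ∫ x in Icc 0 (T : ℝ≥0∞), |h x| ∂ν) / c, fun s hs => ?_⟩
    have hnn : 0 ≤ ∫ x in Icc 0 (T : ℝ≥0∞), |h x| ∂ν := integral_nonneg fun x => abs_nonneg _
    by_cases hs' : (s : ℝ≥0∞) < tG μ γ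
    · simp only [hf, hs', if_true]
      rw [abs_div]
      have h1 : |∫ x in Ioc 0 (s : ℝ≥0∞), h x ∂ν| ≤ ∫ x in Icc 0 (T : ℝ≥0∞), |h x| ∂ν := by
        refine (abs_integral_le_integral_abs).trans ?_
        refine setIntegral_mono_set (hH.2 T hT).abs
          (Eventually.of_forall fun x => abs_nonneg _) (LE.le.eventuallyLE ?_)
        intro x hx
        exact ⟨zero_le, hx.2.trans (by exact_mod_cast hs)⟩
      have h2 := abs_sub C (∫ x in Ioc 0 (s : ℝ≥0∞), h x ∂ν)
      refine div_le_div₀ (by positivity) (h2.trans (by linarith)) hc0 ?_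
      exact (hc s hs hs').trans (le_abs_self _)
    · simp only [hf, hs', if_false, abs_zero]
      positivity
  have hzint : ∀ T ∈ TT μ γ, IntegrableOn (fun x : ℝ≥0∞ => z x.toNNReal)
      (Icc 0 (T : ℝ≥0∞)) ν := by
    intro T hT
    obtain ⟨K, hK⟩ := hbd T hT
    have hdom : IntegrableOn (fun x => (K + |h x|) / ν.real (Ici (T : ℝ≥0∞)))
      (Icc 0 (T : ℝ≥0∞)) ν :=
      ((integrable_const K).add (hH.2 T hT).abs).div_const _
    refine hdom.mono' (hzm.comp ENNReal.measurable_toNNReal).aestronglyMeasurable ?_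
    filter_upwards [ae_restrict_mem measurableSet_Icc] with x hx
    have hxT : x.toNNReal ≤ T := toNNReal_le_of_le_coe hx.2
    have hK' := hK _ hxT
    have hlp := hlpos T hT
    have hK0 : 0 ≤ K := (abs_nonneg _).trans hK'
    by_cases hs' : ((x.toNNReal : ℝ≥0) : ℝ≥0∞) < tG μ γ
    · simp only [hz, hs', if_true, Real.norm_eq_abs]
      rw [abs_div]
      have h2 := abs_sub (f x.toNNReal) (H x.toNNReal)
      refine div_le_div₀ (by positivity) (h2.trans (by simp only [hh]; linarith)) hlp ?_
      refine le_trans (measureReal_mono (Ici_subset_Ici.2 ?_)) (le_abs_self _)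
      exact_mod_cast hxT
    · simp only [hz, hs', if_false, norm_zero]
      positivity
  refine ⟨z, ⟨hzm, hzint⟩, fun t ht => ?_⟩
  have htT := mem_TT_of_lt μ γ hγ ht
  have h0T : ((0 : ℝ≥0) : ℝ≥0∞) < tG μ γ := lt_of_le_of_lt (by simp) ht
  obtain ⟨K, hK⟩ := hbd t htT
  have hcoe : ∀ x : ℝ≥0∞, x ≤ t → ((x.toNNReal : ℝ≥0) : ℝ≥0∞) = x := fun x hx =>
    ENNReal.coe_toNNReal (lt_of_le_of_lt hx ENNReal.coe_lt_top).ne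
  have := ac_lemma ν t (fun x => f x.toNNReal) h (fun x => z x.toNNReal) ?_ ?_ ?_ ?_ ?_ ?_
  · rw [hFf t ht, hFf 0 h0T]
    simpa using this
  · refine Integrable.mono' (integrable_const K)
      (hfm.comp ENNReal.measurable_toNNReal).aestronglyMeasurable ?_
    filter_upwards [ae_restrict_mem measurableSet_Ioc] with x hx
    exact hK _ (toNNReal_le_of_le_coe hx.2)
  · exact (hH.2 t htT).mono_set Ioc_subset_Icc_self
  · exact (hzint t htT).mono_set Ioc_subset_Icc_self
  · intro x hx
    have hx' := hcoe x hx.2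
    have hxl : ((x.toNNReal : ℝ≥0) : ℝ≥0∞) < tG μ γ := by
      rw [hx']; exact lt_of_le_of_lt hx.2 ht
    simp only [hz, hxl, if_true]
    have := hlpos _ (mem_TT_of_lt μ γ hγ hxl)
    rw [hx'] at this ⊢
    field_simp
    rfl
  · intro s hs
    have hs' := hcoe s hs
    have hsl : ((s.toNNReal : ℝ≥0) : ℝ≥0∞) < tG μ γ := by
      rw [hs']; exact lt_of_le_of_lt hs ht
    have := heq _ hsl
    simp only [ENNReal.toNNReal_zero]
    rw [← hFf _ hsl, ← hFf 0 h0T]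
    rw [hs'] at this
    simpa [hC] using this
  · exact hpos t ht

end LocAC


/-! ### From the representation to the local martingale property -/

section Backward

variable [m : MeasurableSpace Ω] (μ : Measure Ω) [IsProbabilityMeasure μ] (γ : Ω → ℝ≥0∞)

lemma Gbar_tG_zero (hγ : Measurable γ) {t : ℝ≥0} (ht : (t : ℝ≥0∞) = tG μ γ) :
    Gbar μ γ t = 0 := by
  have := null_gt_tG μ γ hγ
  rw [Gbar, ht, this]; simp

lemma law_Ici_pos (hγ : Measurable γ) {t : ℝ≥0} (ht : t ∈ TT μ γ) :
    0 < (μ.map γ).real (Ici (t : ℝ≥0∞)) := by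
  rw [Measure.real, Measure.map_apply hγ measurableSet_Ici]
  exact ENNReal.toReal_pos (ne_of_gt ht) (measure_ne_top _ _)

lemma core_zero (hγ : Measurable γ) (hpos : 0 < μ {ω | 0 < γ ω}) (F H : ℝ≥0 → ℝ)
    (hM : CondM μ γ F H) {τ : ℝ≥0} (hτ : τ ∈ TT μ γ) :
    F τ * Gbar μ γ τ + ∫ x in Ioc (0 : ℝ≥0∞) (τ : ℝ≥0∞), H x.toNNReal ∂(μ.map γ)
      = F 0 * Gbar μ γ 0 := by
  obtain ⟨-, hH, heq, hB⟩ := hM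
  rcases TT_cases μ γ hγ hτ with h | ⟨h, hb⟩
  · exact heq τ h
  · have : IsProbabilityMeasure (μ.map γ) := Measure.isProbabilityMeasure_map hγ.aemeasurable
    have h2 := (endpoint_iff (μ.map γ) (t := (τ : ℝ≥0∞)) (h ▸ tG_pos μ γ hγ hpos)
      (fun x => H x.toNNReal)
      ((hH.2 τ hτ).mono_set Ioc_subset_Icc_self) (law_Ici_pos μ γ hγ hτ)
      (by rw [← Gbar_eq μ γ hγ, Gbar_tG_zero μ γ hγ h]) F (F 0 * Gbar μ γ 0)
      (fun u hu => by rw [← Gbar_eq μ γ hγ]; exact heq u (h ▸ hu))).1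
      (by have := hB hb; rw [← h] at this; exact this)
    rw [Gbar_tG_zero μ γ hγ h, h2]; ring

lemma core_eq (hγ : Measurable γ) (hpos : 0 < μ {ω | 0 < γ ω}) (F H : ℝ≥0 → ℝ)
    (hM : CondM μ γ F H) {s τ : ℝ≥0} (hτ : τ ∈ TT μ γ) (hs : s ≤ τ) :
    F s * Gbar μ γ s = F τ * Gbar μ γ τ
      + ∫ x in Ioc (s : ℝ≥0∞) (τ : ℝ≥0∞), H x.toNNReal ∂(μ.map γ) := by
  have h1 := core_zero μ γ hγ hpos F H hM hτ
  have h2 := core_zero μ γ hγ hpos F H hM (TT_down μ γ hs hτ)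
  have hs' : (s : ℝ≥0∞) ≤ τ := by exact_mod_cast hs
  have hint := (hM.2.1.2 τ hτ).mono_set Ioc_subset_Icc_self
  have h3 : ∫ x in Ioc (0 : ℝ≥0∞) (τ : ℝ≥0∞), H x.toNNReal ∂(μ.map γ)
      = ∫ x in Ioc (0 : ℝ≥0∞) (s : ℝ≥0∞), H x.toNNReal ∂(μ.map γ)
       + ∫ x in Ioc (s : ℝ≥0∞) (τ : ℝ≥0∞), H x.toNNReal ∂(μ.map γ) := by
    rw [← setIntegral_union (Ioc_disjoint_Ioc_of_le le_rfl) measurableSet_Ioc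
        (hint.mono_set (Ioc_subset_Ioc_right hs')) (hint.mono_set (Ioc_subset_Ioc_left zero_le)),
        Ioc_union_Ioc_eq_Ioc zero_le hs']
  linarith

section Rep

/-- The representation data of the theorem. -/
structure RepData (M : ℝ≥0 → Ω → ℝ) (F H : ℝ≥0 → ℝ) (L' : Ω → ℝ) : Prop where
  hγ : Measurable γ
  hpos : 0 < μ {ω | 0 < γ ω}
  hF : CondM μ γ F H
  hL : ∀ t ∈ TT μ γ, Integrable (fun ω => ({ω' | γ ω' ≤ (t : ℝ≥0∞)}.indicator L') ω) μ
  hL0 : CondZeroGivenGamma μ γ L'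
  hrep : ∀ᵐ ω ∂μ, ∀ t : ℝ≥0,
            M t ω = if (t : ℝ≥0∞) < γ ω then F t else H (γ ω).toNNReal + L' ω

variable {μ γ} {M : ℝ≥0 → Ω → ℝ} {F H : ℝ≥0 → ℝ} {L' : Ω → ℝ}

lemma rep_integrableOn (R : RepData μ γ M F H L') {τ : ℝ≥0} (hτ : τ ∈ TT μ γ) :
    IntegrableOn (fun ω => H (γ ω).toNNReal) (γ ⁻¹' Iic (τ : ℝ≥0∞)) μ ∧
      IntegrableOn L' (γ ⁻¹' Iic (τ : ℝ≥0∞)) μ := by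
  have ⟨hγ, hpos, hF, hL, hL0, hrep⟩ := R
  constructor
  · have := (law_integrableOn μ γ hγ hF.2.1.1 measurableSet_Icc).1 (hF.2.1.2 τ hτ)
    refine this.mono_set ?_
    intro ω hω
    exact ⟨zero_le, hω⟩
  · have := hL τ hτ
    rwa [show (fun ω => ({ω' | γ ω' ≤ (τ : ℝ≥0∞)}.indicator L') ω)
      = (γ ⁻¹' Iic (τ : ℝ≥0∞)).indicator L' from rfl,
      integrable_indicator_iff (hγ measurableSet_Iic)] at this

lemma rep_integrable (R : RepData μ γ M F H L') {τ : ℝ≥0} (hτ : τ ∈ TT μ γ) : Integrable (M τ) μ := by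
  have ⟨hγ, hpos, hF, hL, hL0, hrep⟩ := R
  obtain ⟨h1, h2⟩ := rep_integrableOn R hτ
  have h3 : Integrable ((γ ⁻¹' Iic (τ : ℝ≥0∞)).indicator (fun ω => H (γ ω).toNNReal + L' ω)) μ :=
    (integrable_indicator_iff (hγ measurableSet_Iic)).2 (h1.add h2)
  have h4 : Integrable ((γ ⁻¹' Ioi (τ : ℝ≥0∞)).indicator (fun _ => F τ)) μ :=
    (integrable_const _).indicator (hγ measurableSet_Ioi)
  refine (h3.add h4).congr ?_
  filter_upwards [hrep] with ω hω
  rw [hω τ]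
  by_cases h : (τ : ℝ≥0∞) < γ ω
  · have : ω ∉ γ ⁻¹' Iic (τ : ℝ≥0∞) := by simpa using h
    simp [h]
  · simp [h, not_lt.1 h]

lemma rep_tail (R : RepData μ γ M F H L') {s τ : ℝ≥0} (hτ : τ ∈ TT μ γ) (hs : s ≤ τ) :
    ∫ ω in γ ⁻¹' Ioi (s : ℝ≥0∞), M τ ω ∂μ = F s * Gbar μ γ s := by
  have ⟨hγ, hpos, hF, hL, hL0, hrep⟩ := R
  obtain ⟨h1, h2⟩ := rep_integrableOn R hτ
  have hs' : (s : ℝ≥0∞) ≤ τ := by exact_mod_cast hs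
  have hMi := rep_integrable R hτ
  have hsub : γ ⁻¹' Ioc (s : ℝ≥0∞) τ ⊆ γ ⁻¹' Iic (τ : ℝ≥0∞) := fun ω hω => hω.2
  rw [core_eq μ γ hγ hpos F H hF hτ hs, ← Ioc_union_Ioi_eq_Ioi hs', preimage_union,
    setIntegral_union _ (hγ measurableSet_Ioi) hMi.integrableOn hMi.integrableOn]
  · have e1 : ∫ ω in γ ⁻¹' Ioi (τ : ℝ≥0∞), M τ ω ∂μ = F τ * Gbar μ γ τ := by
      have : ∫ ω in γ ⁻¹' Ioi (τ : ℝ≥0∞), M τ ω ∂μ = ∫ ω in γ ⁻¹' Ioi (τ : ℝ≥0∞), F τ ∂μ := by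
        refine setIntegral_congr_ae (hγ measurableSet_Ioi) ?_
        filter_upwards [hrep] with ω hω h
        have h' : (τ : ℝ≥0∞) < γ ω := h
        rw [hω τ, if_pos h']
      rw [this, setIntegral_const, smul_eq_mul, mul_comm]
      rfl
    have e2 : ∫ ω in γ ⁻¹' Ioc (s : ℝ≥0∞) τ, M τ ω ∂μ
        = ∫ ω in γ ⁻¹' Ioc (s : ℝ≥0∞) τ, (H (γ ω).toNNReal + L' ω) ∂μ := by
      refine setIntegral_congr_ae (hγ measurableSet_Ioc) ?_
      filter_upwards [hrep] with ω hω h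
      have h' : γ ω ≤ (τ : ℝ≥0∞) := h.2
      rw [hω τ, if_neg (not_lt.2 h')]
    rw [e1, e2, integral_add (h1.mono_set hsub) (h2.mono_set hsub),
      hL0 _ measurableSet_Ioc (h2.mono_set hsub),
      law_setIntegral μ γ hγ hF.2.1.1 measurableSet_Ioc]
    ring
  · refine Disjoint.preimage γ ?_
    exact disjoint_left.2 fun a ha hb => absurd ha.2 (not_le.2 hb)

lemma rep_condExp (R : RepData μ γ M F H L') (had : ∀ t : ℝ≥0, Measurable[jumpσ m γ t] (M t)) {s τ : ℝ≥0}
    (hτ : τ ∈ TT μ γ) (hs : s ≤ τ) : M s =ᵐ[μ] μ[M τ | jumpσ m γ s] := by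
  have ⟨hγ, hpos, hF, hL, hL0, hrep⟩ := R
  have hsT := TT_down μ γ hs hτ
  have hs' : (s : ℝ≥0∞) ≤ τ := by exact_mod_cast hs
  have hMi := rep_integrable R hτ
  have hMs := rep_integrable R hsT
  refine ae_eq_condExp_of_forall_setIntegral_eq (jumpσ_le γ s) hMi
    (fun A _ _ => hMs.integrableOn) ?_ (had s).stronglyMeasurable.aestronglyMeasurable
  intro A hA _
  have hA := (measurableSet_jumpσ γ s A).1 hA
  have hJ : jumpSet γ s = γ ⁻¹' Ioi (s : ℝ≥0∞) := rfl
  have key : ∀ B : Set Ω, MeasurableSet B → (∀ ω ∈ B, γ ω ≤ s) →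
      ∫ ω in B, M s ω ∂μ = ∫ ω in B, M τ ω ∂μ := by
    intro B hB hBs
    refine setIntegral_congr_ae hB ?_
    filter_upwards [hrep] with ω hω h
    have h' := hBs ω h
    rw [hω τ, hω s, if_neg (not_lt.2 h'), if_neg (not_lt.2 (h'.trans hs'))]
  rcases hA.2 with h | h
  · refine key A hA.1 fun ω hω => ?_
    by_contra hlt
    exact (h ▸ (⟨hω, not_le.1 hlt⟩ : ω ∈ A ∩ jumpSet γ s) : ω ∈ (∅ : Set Ω))
  · rw [inter_eq_right, hJ] at h
    have hm := hγ (measurableSet_Ioi (a := (s : ℝ≥0∞)))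
    rw [← sdiff_union_of_subset h,
      setIntegral_union disjoint_sdiff_left hm hMs.integrableOn hMs.integrableOn,
      setIntegral_union disjoint_sdiff_left hm hMi.integrableOn hMi.integrableOn,
      key _ (hA.1.diff hm) (fun ω hω => not_lt.1 hω.2),
      rep_tail R hτ hs,
      rep_tail R hsT le_rfl]

end Rep

end Backward


section BackwardFinal

variable [m : MeasurableSpace Ω] {μ : Measure Ω} [IsProbabilityMeasure μ] {γ : Ω → ℝ≥0∞}
  {M : ℝ≥0 → Ω → ℝ} {F H : ℝ≥0 → ℝ} {L' : Ω → ℝ}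

lemma F_left_lim (R : RepData μ γ M F H L') {t : ℝ≥0} (ht : t ∈ TT μ γ) :
    ∃ c : ℝ, Tendsto F (𝓝[<] t) (𝓝 c) := by
  obtain ⟨z, ⟨-, hz⟩, hFz⟩ := R.hF.1
  have h1 := tendsto_Ioc_left (μ.map γ) (t : ℝ≥0∞) (fun x => z x.toNNReal)
    ((hz t ht).mono_set (fun x hx => ⟨zero_le, hx.2.le⟩))
  have h2 : Tendsto (fun u : ℝ≥0 => (u : ℝ≥0∞)) (𝓝[<] t) (𝓝[<] (t : ℝ≥0∞)) := by
    refine tendsto_nhdsWithin_of_tendsto_nhds_of_eventually_within _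
      ((ENNReal.continuous_coe.tendsto t).mono_left nhdsWithin_le_nhds) ?_
    filter_upwards [self_mem_nhdsWithin] with u hu
    exact ENNReal.coe_lt_coe.2 hu
  refine ⟨_, ((h1.comp h2).const_add (F 0)).congr' ?_⟩
  filter_upwards [self_mem_nhdsWithin] with u hu
  refine (hFz u ?_).symm
  exact lt_of_lt_of_le (ENNReal.coe_lt_coe.2 hu) (TT_le_tG μ γ R.hγ ht)

lemma rep_cadlag (R : RepData μ γ M F H L')
    (hrc : ∀ ω : Ω, ∀ t : ℝ≥0, ContinuousWithinAt (fun s => M s ω) (Ici t) t) :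
    ∀ᵐ ω ∂μ, Cadlag fun t => M t ω := by
  filter_upwards [R.hrep, ae_mem_TT μ γ R.hγ] with ω hω hTT
  refine ⟨hrc ω, fun t _ => ?_⟩
  by_cases h : γ ω < t
  · refine ⟨H (γ ω).toNNReal + L' ω, tendsto_const_nhds.congr' ?_⟩
    have hfin : γ ω ≠ ⊤ := (h.trans_le le_top).ne
    have hlt : (γ ω).toNNReal < t := by
      rw [← ENNReal.coe_lt_coe, ENNReal.coe_toNNReal hfin]; exact h
    have : ∀ᶠ u in 𝓝[<] t, (γ ω).toNNReal < u := mem_nhdsWithin_of_mem_nhds (lt_mem_nhds hlt)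
    filter_upwards [this] with u hu
    have hu' : γ ω < u := by
      rw [← ENNReal.coe_toNNReal hfin]; exact ENNReal.coe_lt_coe.2 hu
    rw [hω u, if_neg (not_lt.2 hu'.le)]
  · have h := not_lt.1 h
    obtain ⟨c, hc⟩ := F_left_lim R (hTT t h)
    refine ⟨c, hc.congr' ?_⟩
    filter_upwards [self_mem_nhdsWithin] with u hu
    have hu' : (u : ℝ≥0∞) < γ ω := lt_of_lt_of_le (ENNReal.coe_lt_coe.2 hu) h
    rw [hω u, if_pos hu']

lemma rep_stopped (R : RepData μ γ M F H L')
    (had : ∀ t : ℝ≥0, Measurable[jumpσ m γ t] (M t)) {τ : ℝ≥0} (hτ : τ ∈ TT μ γ)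
    (T : Ω → ℝ≥0∞) (hT : T = fun ω => if (τ : ℝ≥0∞) < γ ω then (τ : ℝ≥0∞) else ⊤) :
    UIMartingale μ γ (stopped M T) := by
  have hval1 : ∀ t ω, (τ : ℝ≥0∞) < γ ω → stopped M T t ω = M (min t τ) ω := by
    intro t ω h
    simp only [stopped, hT, h, if_true]
    congr 1
  have hval2 : ∀ t ω, ¬ (τ : ℝ≥0∞) < γ ω → stopped M T t ω = M t ω := by
    intro t ω h
    simp [stopped, hT, h]
  have hval3 : ∀ t ≤ τ, stopped M T t = M t := by
    intro t ht
    ext ω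
    by_cases h : (τ : ℝ≥0∞) < γ ω
    · rw [hval1 t ω h, min_eq_left ht]
    · exact hval2 t ω h
  have hmeas : ∀ t, Measurable[jumpσ m γ t] (stopped M T t) := by
    intro t
    rcases le_total t τ with ht | ht
    · rw [hval3 t ht]; exact had t
    · have : stopped M T t = fun ω => if (τ : ℝ≥0∞) < γ ω then M τ ω else M t ω := by
        ext ω
        by_cases h : (τ : ℝ≥0∞) < γ ω
        · rw [hval1 t ω h, min_eq_right ht, if_pos h]
        · rw [hval2 t ω h, if_neg h]
      rw [this]
      refine Measurable.ite (m := jumpσ m γ t)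
        (jumpσ_mono γ ht _ (gt_mem_jumpσ γ R.hγ τ)) ?_ (had t)
      exact (had τ).mono (jumpσ_mono γ ht) le_rfl
  have hint := rep_integrable R hτ
  have hce : ∀ t, stopped M T t =ᵐ[μ] μ[M τ | jumpσ m γ t] := by
    intro t
    rcases le_total t τ with ht | ht
    · rw [hval3 t ht]; exact rep_condExp R had hτ ht
    · rw [condExp_of_stronglyMeasurable (jumpσ_le γ t)
        ((had τ).mono (jumpσ_mono γ ht) le_rfl).stronglyMeasurable hint]
      filter_upwards [R.hrep] with ω hω
      by_cases h : (τ : ℝ≥0∞) < γ ω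
      · rw [hval1 t ω h, min_eq_right ht]
      · have h2 : ¬ (t : ℝ≥0∞) < γ ω := by
          have : (τ : ℝ≥0∞) ≤ t := by exact_mod_cast ht
          exact not_lt.2 ((not_lt.1 h).trans this)
        rw [hval2 t ω h, hω t, hω τ, if_neg h, if_neg h2]
  refine ⟨⟨fun t _ => hmeas t, fun t _ => integrable_condExp.congr (hce t).symm, ?_⟩, ?_⟩
  · intro s _ t _ hst
    refine (condExp_congr_ae (hce t)).trans ?_
    exact (condExp_condExp_of_le (jumpσ_mono γ hst) (jumpσ_le γ t)).trans (hce s).symm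
  · have := hint.uniformIntegrable_condExp (fun t : ℝ≥0 => jumpσ_le γ t)
    exact this.ae_eq fun t => (hce t).symm

lemma backward (R : RepData μ γ M F H L')
    (hrc : ∀ ω : Ω, ∀ t : ℝ≥0, ContinuousWithinAt (fun s => M s ω) (Ici t) t)
    (had : ∀ t : ℝ≥0, Measurable[jumpσ m γ t] (M t)) : LocalMartingale μ γ M := by
  obtain ⟨τ, hmono, hτ, hcof, htop⟩ := exists_TT_seq μ γ R.hγ R.hpos
  refine ⟨had, rep_cadlag R hrc,
    fun n ω => if (τ n : ℝ≥0∞) < γ ω then (τ n : ℝ≥0∞) else ⊤, ?_, ?_, ?_⟩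
  · intro n t
    rcases le_or_gt (τ n) t with h | h
    · have : {ω | (if (τ n : ℝ≥0∞) < γ ω then (τ n : ℝ≥0∞) else ⊤) ≤ (t : ℝ≥0∞)}
          = {ω | (τ n : ℝ≥0∞) < γ ω} := by
        ext ω
        by_cases h' : (τ n : ℝ≥0∞) < γ ω <;> simp [h', h]
      rw [this]
      exact (measurableSet_jumpσ γ t _).1 (jumpσ_mono γ h _ (gt_mem_jumpσ γ R.hγ (τ n)))
    · have : {ω | (if (τ n : ℝ≥0∞) < γ ω then (τ n : ℝ≥0∞) else ⊤) ≤ (t : ℝ≥0∞)} = ∅ := by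
        ext ω
        by_cases h' : (τ n : ℝ≥0∞) < γ ω <;> simp [h', h]
      rw [this]
      exact ⟨MeasurableSet.empty, Or.inl (by simp)⟩
  · filter_upwards [ae_mem_TT μ γ R.hγ] with ω hω
    constructor
    · intro a b hab
      have hab' : (τ a : ℝ≥0∞) ≤ τ b := by exact_mod_cast hmono hab
      by_cases h1 : (τ b : ℝ≥0∞) < γ ω
      · have h2 : (τ a : ℝ≥0∞) < γ ω := hab'.trans_lt h1
        simp [h1, h2, hmono hab]
      · simp [h1]
    · by_cases hfin : γ ω = ⊤
      · simp only [hfin, ENNReal.coe_lt_top, if_true]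
        refine htop ?_
        refine ENNReal.eq_top_of_forall_nnreal_le fun r => ?_
        exact TT_le_tG μ γ R.hγ (hω r (by simp [hfin]))
      · obtain ⟨n, hn⟩ := hcof (γ ω).toNNReal (hω _ (ENNReal.coe_toNNReal hfin).le)
        refine tendsto_const_nhds.congr' ?_
        filter_upwards [eventually_ge_atTop n] with k hk
        have h1 : γ ω ≤ τ k := by
          rw [← ENNReal.coe_toNNReal hfin]
          exact_mod_cast hn.trans (hmono hk)
        rw [if_neg (not_lt.2 h1)]
  · intro n
    exact rep_stopped R had (hτ n) _ rfl

end BackwardFinal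


section Forward

variable [m : MeasurableSpace Ω] {μ : Measure Ω} [IsProbabilityMeasure μ] {γ : Ω → ℝ≥0∞}
  {M : ℝ≥0 → Ω → ℝ}

/-- The terminal value of the process after the jump. -/
def Lval (γ : Ω → ℝ≥0∞) (M : ℝ≥0 → Ω → ℝ) : Ω → ℝ :=
  fun ω => M ((⌈(γ ω).toNNReal⌉₊ : ℕ) : ℝ≥0) ω

lemma measurable_Lval (hγ : Measurable γ)
    (had : ∀ t : ℝ≥0, Measurable[jumpσ m γ t] (M t)) : Measurable (Lval γ M) := by
  have h1 : Measurable (fun p : ℕ × Ω => M ((p.1 : ℕ) : ℝ≥0) p.2) :=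
    measurable_from_prod_countable_right fun k => (had k).mono (jumpσ_le γ _) le_rfl
  have h2 : Measurable (fun ω => ⌈(γ ω).toNNReal⌉₊) :=
    Nat.measurable_ceil.comp (ENNReal.measurable_toNNReal.comp hγ)
  exact h1.comp (h2.prodMk measurable_id)

lemma mart_const_after (hγ : Measurable γ) {X : ℝ≥0 → Ω → ℝ} (hX : UIMartingale μ γ X)
    {s t : ℝ≥0} (hst : s ≤ t) : ∀ᵐ ω ∂μ, γ ω ≤ s → X t ω = X s ω := by
  have hS := le_mem_jumpσ γ hγ s
  have hS' : MeasurableSet {ω | γ ω ≤ (s : ℝ≥0∞)} := jumpσ_le γ s _ hS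
  have h1 : μ[X t | jumpσ m γ s] =ᵐ[μ.restrict {ω | γ ω ≤ (s : ℝ≥0∞)}] μ[X t | m] := by
    refine condExp_ae_eq_restrict_of_measurableSpace_eq_on (jumpσ_le γ s) le_rfl hS ?_
    intro A
    constructor
    · exact fun h => jumpσ_le γ s _ h
    · intro h
      refine (measurableSet_jumpσ γ s _).2 ⟨h, Or.inl ?_⟩
      ext ω
      simp only [jumpSet, mem_inter_iff, mem_empty_iff_false, iff_false, not_and]
      intro hω h'
      have h1 : γ ω ≤ s := hω.1
      have h2 : (s : ℝ≥0∞) < γ ω := h'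
      exact absurd h2 (not_lt.2 h1)
  have hm : StronglyMeasurable (X t) :=
    ((hX.1.1 t (mem_univ _)).mono (jumpσ_le γ t) le_rfl).stronglyMeasurable
  rw [condExp_of_stronglyMeasurable le_rfl hm (hX.1.2.1 t (mem_univ _))] at h1
  have h2 := (ae_restrict_iff' hS').1 h1
  have h3 := hX.1.2.2 s (mem_univ _) t (mem_univ _) hst
  filter_upwards [h2, h3] with ω a b c
  rw [← a c, b]

lemma lm_const_after (hγ : Measurable γ) (h : LocalMartingale μ γ M) {s t : ℝ≥0} (hst : s ≤ t) :
    ∀ᵐ ω ∂μ, γ ω ≤ s → M t ω = M s ω := by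
  obtain ⟨had, -, T, hT, hTlim, hUI⟩ := h
  have h1 := ae_all_iff.2 fun n => mart_const_after hγ (hUI n) hst
  filter_upwards [h1, hTlim] with ω a b c
  have h2 : ∀ᶠ n in atTop, (t : ℝ≥0∞) < T n ω := b.2.eventually (lt_mem_nhds ENNReal.coe_lt_top)
  obtain ⟨n, hn⟩ := h2.exists
  have h3 := a n c
  have hs : (s : ℝ≥0∞) ≤ T n ω := le_trans (by exact_mod_cast hst) hn.le
  simpa [stopped, inf_eq_left.2 hn.le, inf_eq_left.2 hs] using h3

lemma lm_eq_Lval (hγ : Measurable γ) (h : LocalMartingale μ γ M)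
    (hrc : ∀ ω : Ω, ∀ t : ℝ≥0, ContinuousWithinAt (fun s => M s ω) (Ici t) t) :
    ∀ᵐ ω ∂μ, ∀ t : ℝ≥0, γ ω ≤ t → M t ω = Lval γ M ω := by
  obtain ⟨D, hDc, hDd⟩ := TopologicalSpace.exists_countable_dense ℝ≥0
  set C : Set ℝ≥0 := D ∪ range (fun k : ℕ => (k : ℝ≥0)) with hC
  have hCc : C.Countable := hDc.union (countable_range _)
  have hae : ∀ᵐ ω ∂μ, ∀ p ∈ C, ∀ q ∈ C, p ≤ q → γ ω ≤ p → M q ω = M p ω := by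
    rw [ae_ball_iff hCc]
    intro p _
    rw [ae_ball_iff hCc]
    intro q _
    by_cases hpq : p ≤ q
    · filter_upwards [lm_const_after hγ h hpq] with ω hω _ using hω
    · exact Eventually.of_forall fun ω h' => absurd h' hpq
  filter_upwards [hae] with ω hω
  have hkey : ∀ q ∈ C, γ ω ≤ q → M q ω = Lval γ M ω := by
    intro q hq hγq
    have hfin : γ ω ≠ ⊤ := (hγq.trans_lt ENNReal.coe_lt_top).ne
    have hN : γ ω ≤ (((⌈(γ ω).toNNReal⌉₊ : ℕ) : ℝ≥0) : ℝ≥0∞) := by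
      conv_lhs => rw [← ENNReal.coe_toNNReal hfin]
      exact ENNReal.coe_le_coe.2 (Nat.le_ceil _)
    have hNC : ((⌈(γ ω).toNNReal⌉₊ : ℕ) : ℝ≥0) ∈ C := Or.inr ⟨_, rfl⟩
    rcases le_total q ((⌈(γ ω).toNNReal⌉₊ : ℕ) : ℝ≥0) with h1 | h1
    · exact (hω q hq _ hNC h1 hγq).symm
    · exact hω _ hNC q hq h1 hN
  intro t ht
  have hcl : t ∈ closure (Ioi t ∩ D) := by
    have h1 : closure (Ioi t) ⊆ closure (Ioi t ∩ D) :=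
      closure_minimal (hDd.open_subset_closure_inter isOpen_Ioi) isClosed_closure
    apply h1
    rw [closure_Ioi]
    exact self_mem_Ici
  have h2 : ContinuousWithinAt (fun s => M s ω) (Ioi t ∩ D) t :=
    (hrc ω t).mono fun x hx => (mem_Ioi.1 hx.1).le
  have h3 := h2.mem_closure_image hcl
  have h4 : (fun s => M s ω) '' (Ioi t ∩ D) ⊆ {Lval γ M ω} := by
    rintro _ ⟨q, hq, rfl⟩
    refine hkey q (Or.inl hq.2) (ht.trans ?_)
    exact_mod_cast (mem_Ioi.1 hq.1).le
  have h5 := closure_mono h4 h3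
  simpa using h5

lemma lm_integrable (hγ : Measurable γ) (h : LocalMartingale μ γ M)
    (hrc : ∀ ω : Ω, ∀ t : ℝ≥0, ContinuousWithinAt (fun s => M s ω) (Ici t) t) {t : ℝ≥0}
    (ht : t ∈ TT μ γ) : Integrable (M t) μ ∧ ∫ ω, M t ω ∂μ = ∫ ω, M 0 ω ∂μ := by
  have hM := h
  obtain ⟨had, -, T, hT, hTlim, hUI⟩ := h
  have h1 : ∃ n, ∃ ω, (t : ℝ≥0∞) ≤ γ ω ∧ (t : ℝ≥0∞) ≤ T n ω := by
    by_contra hcon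
    push Not at hcon
    have h0 : μ {ω | (t : ℝ≥0∞) ≤ γ ω} = 0 := by
      rw [measure_eq_zero_iff_ae_notMem]
      filter_upwards [hTlim] with ω hω hmem
      have hmem' : (t : ℝ≥0∞) ≤ γ ω := hmem
      have h2 : ∀ᶠ n in atTop, (t : ℝ≥0∞) < T n ω :=
        hω.2.eventually (lt_mem_nhds ENNReal.coe_lt_top)
      obtain ⟨n, hn⟩ := h2.exists
      exact absurd (hcon n ω hmem') (not_lt.2 hn.le)
    have ht' : 0 < μ {ω | (t : ℝ≥0∞) ≤ γ ω} := ht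
    exact ht'.ne' h0
  obtain ⟨n, ω₀, hω1, hω2⟩ := h1
  have hTn : ∀ ω, min (γ ω) t ≤ T n ω := by
    intro ω
    by_contra hcon
    have hcon := not_le.1 hcon
    have hfin : T n ω ≠ ⊤ := (hcon.trans_le le_top).ne
    obtain ⟨hlt1, hlt2⟩ := lt_min_iff.1 hcon
    have hs := ENNReal.coe_toNNReal hfin
    rcases (hT n (T n ω).toNNReal).2 with h3 | h3
    · have h4 : ω ∈ {ω' | T n ω' ≤ ((T n ω).toNNReal : ℝ≥0∞)} ∩ jumpSet γ (T n ω).toNNReal := by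
        refine ⟨?_, ?_⟩
        · show T n ω ≤ _
          rw [hs]
        · show _ < γ ω
          rw [hs]; exact hlt1
      rw [h3] at h4
      exact h4
    · have h4 : ω₀ ∈ jumpSet γ (T n ω).toNNReal := by
        show _ < γ ω₀
        rw [hs]; exact hlt2.trans_le hω1
      rw [← h3] at h4
      have h5 : T n ω₀ ≤ ((T n ω).toNNReal : ℝ≥0∞) := h4.1
      rw [hs] at h5
      exact absurd (hlt2.trans_le hω2) (not_lt.2 h5)
  have hst : stopped M (T n) t =ᵐ[μ] M t := by
    filter_upwards [lm_eq_Lval hγ hM hrc] with ω hω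
    rcases le_or_gt (t : ℝ≥0∞) (T n ω) with h6 | h6
    · simp [stopped, inf_eq_left.2 h6]
    · have hfin : T n ω ≠ ⊤ := (h6.trans_le le_top).ne
      have h7 : γ ω ≤ T n ω := by
        rcases min_le_iff.1 (hTn ω) with h8 | h8
        · exact h8
        · exact absurd h6 (not_lt.2 h8)
      have h9 : stopped M (T n) t ω = M (T n ω).toNNReal ω := by
        simp [stopped, inf_eq_right.2 h6.le]
      rw [h9, hω t (h7.trans h6.le), hω _ (by rwa [ENNReal.coe_toNNReal hfin])]
  have h0 : stopped M (T n) 0 = M 0 := by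
    ext ω; simp [stopped]
  have hU := hUI n
  refine ⟨(hU.1.2.1 t (mem_univ _)).congr hst, ?_⟩
  rw [← integral_congr_ae hst, ← h0,
    ← integral_congr_ae (hU.1.2.2 0 (mem_univ _) t (mem_univ _) zero_le)]
  exact (integral_condExp (jumpσ_le γ 0)).symm

end Forward


section ForwardTwo

variable [m : MeasurableSpace Ω] {μ : Measure Ω} [IsProbabilityMeasure μ] {γ : Ω → ℝ≥0∞}
  {M : ℝ≥0 → Ω → ℝ}

/-- The regression function of `L` on `γ`. -/
def Hval (μ : Measure Ω) [IsProbabilityMeasure μ] (γ : Ω → ℝ≥0∞) (L : Ω → ℝ) : ℝ≥0 → ℝ :=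
  fun x => ∫ y, y ∂(ProbabilityTheory.condDistrib L γ μ (x : ℝ≥0∞))

lemma measurable_Hval (L : Ω → ℝ) : Measurable (Hval μ γ L) := by
  have h1 : StronglyMeasurable (fun x : ℝ≥0∞ =>
      ∫ y, y ∂(ProbabilityTheory.condDistrib L γ μ x)) :=
    StronglyMeasurable.integral_condDistrib (f := fun p : ℝ≥0∞ × ℝ => p.2)
      measurable_snd.stronglyMeasurable
  exact h1.measurable.comp measurable_coe_nnreal_ennreal

lemma Hval_spec (hγ : Measurable γ) {L : Ω → ℝ} (hL : Measurable L) {t : ℝ≥0} {B : Set ℝ≥0∞}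
    (hB : MeasurableSet B) (hBt : B ⊆ Iic (t : ℝ≥0∞)) (hint : IntegrableOn L (γ ⁻¹' B) μ) :
    IntegrableOn (fun ω => Hval μ γ L (γ ω).toNNReal) (γ ⁻¹' B) μ ∧
      ∫ ω in γ ⁻¹' B, Hval μ γ L (γ ω).toNNReal ∂μ = ∫ ω in γ ⁻¹' B, L ω ∂μ := by
  have hS : MeasurableSet (γ ⁻¹' B) := hγ hB
  set f : ℝ≥0∞ × ℝ → ℝ := fun p => B.indicator (fun _ => (1 : ℝ)) p.1 * p.2 with hf
  have hfm : Measurable f :=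
    ((measurable_const.indicator hB).comp measurable_fst).mul measurable_snd
  have hfL : (fun a => f (γ a, L a)) = (γ ⁻¹' B).indicator L := by
    ext a
    by_cases ha : γ a ∈ B
    · have ha' : a ∈ γ ⁻¹' B := ha
      simp [hf, ha, ha']
    · have ha' : a ∉ γ ⁻¹' B := ha
      simp [hf, ha]
  have hfi : Integrable (fun a => f (γ a, L a)) μ := by
    rw [hfL, integrable_indicator_iff hS]; exact hint
  have hce := ProbabilityTheory.condExp_prod_ae_eq_integral_condDistrib hγ hL.aemeasurable
    hfm.stronglyMeasurable hfi
  have hr : (fun a => ∫ y, f (γ a, y) ∂(ProbabilityTheory.condDistrib L γ μ (γ a)))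
      = (γ ⁻¹' B).indicator (fun ω => Hval μ γ L (γ ω).toNNReal) := by
    ext a
    by_cases ha : γ a ∈ B
    · have ha' : a ∈ γ ⁻¹' B := ha
      have hfin : γ a ≠ ⊤ := ((mem_Iic.1 (hBt ha)).trans_lt ENNReal.coe_lt_top).ne
      rw [indicator_of_mem ha']
      simp only [hf, Hval, ENNReal.coe_toNNReal hfin, indicator_of_mem ha, one_mul]
    · have ha' : a ∉ γ ⁻¹' B := ha
      rw [indicator_of_notMem ha']
      simp [hf, ha]
  rw [hr] at hce
  have h1 : Integrable ((γ ⁻¹' B).indicator (fun ω => Hval μ γ L (γ ω).toNNReal)) μ :=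
    integrable_condExp.congr hce
  refine ⟨(integrable_indicator_iff hS).1 h1, ?_⟩
  rw [← integral_indicator hS, ← integral_indicator hS, ← integral_congr_ae hce,
    integral_condExp hγ.comap_le, hfL]

/-- The centred part of the jump. -/
def Lcent (μ : Measure Ω) [IsProbabilityMeasure μ] (γ : Ω → ℝ≥0∞) (L : Ω → ℝ) : Ω → ℝ :=
  fun ω => if γ ω = ⊤ then 0 else L ω - Hval μ γ L (γ ω).toNNReal

lemma measurable_Lcent (hγ : Measurable γ) {L : Ω → ℝ} (hL : Measurable L) :
    Measurable (Lcent μ γ L) := by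
  refine Measurable.ite (hγ (measurableSet_singleton ⊤)) measurable_const ?_
  exact hL.sub ((measurable_Hval L).comp (ENNReal.measurable_toNNReal.comp hγ))

lemma Lcent_spec (hγ : Measurable γ) {L : Ω → ℝ} (hL : Measurable L) {t : ℝ≥0} {B : Set ℝ≥0∞}
    (hB : MeasurableSet B) (hBt : B ⊆ Iic (t : ℝ≥0∞)) (hint : IntegrableOn L (γ ⁻¹' B) μ) :
    IntegrableOn (Lcent μ γ L) (γ ⁻¹' B) μ ∧ ∫ ω in γ ⁻¹' B, Lcent μ γ L ω ∂μ = 0 := by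
  obtain ⟨h1, h2⟩ := Hval_spec hγ hL hB hBt hint
  have hcong : EqOn (Lcent μ γ L) (fun ω => L ω - Hval μ γ L (γ ω).toNNReal) (γ ⁻¹' B) := by
    intro ω hω
    have hfin : γ ω ≠ ⊤ := ((mem_Iic.1 (hBt hω)).trans_lt ENNReal.coe_lt_top).ne
    simp [Lcent, hfin]
  refine ⟨(integrableOn_congr_fun hcong (hγ hB)).2 (hint.sub h1), ?_⟩
  rw [setIntegral_congr_fun (hγ hB) hcong, integral_sub hint h1, h2, sub_self]

lemma Lcent_condZero (hγ : Measurable γ) (hpos : 0 < μ {ω | 0 < γ ω}) {L : Ω → ℝ}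
    (hL : Measurable L)
    (hint : ∀ t ∈ TT μ γ, IntegrableOn L (γ ⁻¹' (Iic (t : ℝ≥0∞))) μ) :
    CondZeroGivenGamma μ γ (Lcent μ γ L) := by
  intro B hB hBi
  obtain ⟨τ, hmono, hτ, hcof, -⟩ := exists_TT_seq μ γ hγ hpos
  set S : ℕ → Set Ω := fun n => γ ⁻¹' (B ∩ Iic (τ n : ℝ≥0∞)) with hS
  have hSm : ∀ n, MeasurableSet (S n) := fun n => hγ (hB.inter measurableSet_Iic)
  have hSmono : Monotone S := by
    intro a b hab ω hω
    have h2 : γ ω ≤ τ a := hω.2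
    refine ⟨hω.1, ?_⟩
    show γ ω ≤ τ b
    exact h2.trans (by exact_mod_cast hmono hab)
  have hSub : (⋃ n, S n) ⊆ γ ⁻¹' B := iUnion_subset fun n ω hω => hω.1
  have hlim := tendsto_setIntegral_of_monotone hSm hSmono (hBi.mono_set hSub)
  have hz : ∀ n, ∫ ω in S n, Lcent μ γ L ω ∂μ = 0 := by
    intro n
    refine (Lcent_spec hγ hL (hB.inter measurableSet_Iic) inter_subset_right
      ((hint _ (hτ n)).mono_set ?_)).2
    exact preimage_mono inter_subset_right
  simp only [hz] at hlim
  have h0 := tendsto_nhds_unique hlim tendsto_const_nhds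
  rw [← h0]
  refine setIntegral_eq_of_subset_of_ae_sdiff_eq_zero (hγ hB).nullMeasurableSet hSub ?_
  filter_upwards [ae_mem_TT μ γ hγ] with ω hω hmem
  by_cases hfin : γ ω = ⊤
  · simp [Lcent, hfin]
  · exfalso
    obtain ⟨n, hn⟩ := hcof (γ ω).toNNReal (hω _ (ENNReal.coe_toNNReal hfin).le)
    refine hmem.2 (mem_iUnion.2 ⟨n, hmem.1, ?_⟩)
    show γ ω ≤ τ n
    rw [← ENNReal.coe_toNNReal hfin]
    exact_mod_cast hn

lemma exists_Fval (had : ∀ t : ℝ≥0, Measurable[jumpσ m γ t] (M t)) :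
    ∃ F : ℝ≥0 → ℝ, ∀ (t : ℝ≥0) (ω : Ω), (t : ℝ≥0∞) < γ ω → M t ω = F t := by
  have : ∀ t : ℝ≥0, ∃ c : ℝ, ∀ ω, (t : ℝ≥0∞) < γ ω → M t ω = c := by
    intro t
    by_cases h : ∃ ω, (t : ℝ≥0∞) < γ ω
    · obtain ⟨ω₀, h0⟩ := h
      exact ⟨M t ω₀, fun ω hω => const_on_jumpSet γ t (M t) (had t) hω h0⟩
    · exact ⟨0, fun ω hω => absurd ⟨ω, hω⟩ h⟩
  choose F hF using this
  exact ⟨F, hF⟩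

lemma forward (hγ : Measurable γ) (hpos : 0 < μ {ω | 0 < γ ω})
    (hrc : ∀ ω : Ω, ∀ t : ℝ≥0, ContinuousWithinAt (fun s => M s ω) (Ici t) t)
    (h : LocalMartingale μ γ M) :
    ∃ F H : ℝ≥0 → ℝ, ∃ L' : Ω → ℝ,
          Measurable L' ∧
          CondM μ γ F H ∧
          (∀ t ∈ TT μ γ,
            Integrable (fun ω => ({ω' | γ ω' ≤ (t : ℝ≥0∞)}.indicator L') ω) μ) ∧
          CondZeroGivenGamma μ γ L' ∧
          (∀ᵐ ω ∂μ, ∀ t : ℝ≥0,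
            M t ω = if (t : ℝ≥0∞) < γ ω then F t else H (γ ω).toNNReal + L' ω) := by
  have had := h.1
  obtain ⟨F, hF⟩ := exists_Fval (m := m) had
  set L := Lval γ M with hLdef
  have hLm : Measurable L := measurable_Lval hγ had
  have hLeq := lm_eq_Lval hγ h hrc
  have hLint : ∀ t ∈ TT μ γ, IntegrableOn L (γ ⁻¹' (Iic (t : ℝ≥0∞))) μ := by
    intro t ht
    have h1 := (lm_integrable hγ h hrc ht).1.integrableOn (s := γ ⁻¹' (Iic (t : ℝ≥0∞)))
    refine h1.congr ?_
    refine (ae_restrict_iff' (hγ measurableSet_Iic)).2 ?_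
    filter_upwards [hLeq] with ω hω hmem using hω t hmem
  have hHint : ∀ t ∈ TT μ γ,
      IntegrableOn (fun ω => Hval μ γ L (γ ω).toNNReal) (γ ⁻¹' (Iic (t : ℝ≥0∞))) μ :=
    fun t ht => (Hval_spec hγ hLm measurableSet_Iic subset_rfl (hLint t ht)).1
  have hH1 : MemL1loc μ γ (Hval μ γ L) := by
    refine ⟨measurable_Hval L, fun t ht => ?_⟩
    rw [law_integrableOn μ γ hγ (measurable_Hval L) measurableSet_Icc]
    exact (hHint t ht).mono_set (preimage_mono fun x hx => hx.2)
  have h0TT : (0 : ℝ≥0) ∈ TT μ γ := mem_TT_of_lt μ γ hγ (by simpa using tG_pos μ γ hγ hpos)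
  have hsplit : ∀ t ∈ TT μ γ, ∫ ω, M t ω ∂μ
      = F t * Gbar μ γ t + ∫ ω in γ ⁻¹' (Iic (t : ℝ≥0∞)), L ω ∂μ := by
    intro t ht
    have hms : MeasurableSet (γ ⁻¹' (Iic (t : ℝ≥0∞))) := hγ measurableSet_Iic
    rw [← integral_add_compl hms (lm_integrable hγ h hrc ht).1, add_comm]
    congr 1
    · have hc : EqOn (M t) (fun _ => F t) (γ ⁻¹' (Iic (t : ℝ≥0∞)))ᶜ := by
        intro ω hω
        refine hF t ω (not_le.1 ?_)
        exact fun h' => hω h'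
      have hset : (γ ⁻¹' (Iic (t : ℝ≥0∞)))ᶜ = {ω | (t : ℝ≥0∞) < γ ω} := by
        ext ω; simp
      rw [setIntegral_congr_fun hms.compl hc, setIntegral_const, smul_eq_mul, mul_comm, hset]
      rfl
    · refine setIntegral_congr_ae hms ?_
      filter_upwards [hLeq] with ω hω hmem using hω t hmem
  have heq : ∀ t ∈ TT μ γ, F t * Gbar μ γ t
      + ∫ x in Ioc (0 : ℝ≥0∞) (t : ℝ≥0∞), Hval μ γ L x.toNNReal ∂(μ.map γ) = F 0 * Gbar μ γ 0 := by
    intro t ht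
    have e1 := hsplit t ht
    have e2 := hsplit 0 h0TT
    have e3 := (lm_integrable hγ h hrc ht).2
    have hsub : Ioc (0 : ℝ≥0∞) (t : ℝ≥0∞) ⊆ Iic (t : ℝ≥0∞) := fun x hx => hx.2
    have e4 := (Hval_spec hγ hLm measurableSet_Ioc hsub
      ((hLint t ht).mono_set (preimage_mono hsub))).2
    rw [law_setIntegral μ γ hγ (measurable_Hval L) measurableSet_Ioc, e4]
    have hun : γ ⁻¹' (Iic (t : ℝ≥0∞))
        = γ ⁻¹' (Iic ((0 : ℝ≥0) : ℝ≥0∞)) ∪ γ ⁻¹' (Ioc (0 : ℝ≥0∞) (t : ℝ≥0∞)) := by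
      rw [← preimage_union, ENNReal.coe_zero, Iic_union_Ioc_eq_Iic zero_le]
    have hdisj : Disjoint (γ ⁻¹' (Iic ((0 : ℝ≥0) : ℝ≥0∞)))
        (γ ⁻¹' (Ioc (0 : ℝ≥0∞) (t : ℝ≥0∞))) := by
      refine Disjoint.preimage γ ?_
      rw [Set.disjoint_left]
      intro x hx hx'
      have hx1 : x ≤ 0 := by simpa using hx
      exact absurd hx'.1 (not_lt.2 hx1)
    rw [hun, setIntegral_union hdisj (hγ measurableSet_Ioc) (hLint 0 h0TT)
      ((hLint t ht).mono_set (preimage_mono hsub))] at e1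
    linarith
  have heq' : ∀ t : ℝ≥0, (t : ℝ≥0∞) < tG μ γ → F t * Gbar μ γ t
      + ∫ x in Ioc (0 : ℝ≥0∞) (t : ℝ≥0∞), Hval μ γ L x.toNNReal ∂(μ.map γ)
        = F 0 * Gbar μ γ 0 := fun t ht => heq t (mem_TT_of_lt μ γ hγ ht)
  refine ⟨F, Hval μ γ L, Lcent μ γ L, measurable_Lcent hγ hLm,
    ⟨exists_LocAC μ γ hγ F _ hH1 heq', hH1, heq', ?_⟩, ?_, Lcent_condZero hγ hpos hLm hLint, ?_⟩
  · intro hB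
    have hfin : tG μ γ ≠ ⊤ := by
      intro h
      simp [CaseB, h] at hB
    obtain ⟨u, hu⟩ : ∃ u : ℝ≥0, (u : ℝ≥0∞) = tG μ γ := ⟨_, ENNReal.coe_toNNReal hfin⟩
    have huTT : u ∈ TT μ γ := mem_TT_of_caseB μ γ hB hu
    have hprob : IsProbabilityMeasure (μ.map γ) := Measure.isProbabilityMeasure_map hγ.aemeasurable
    have hG0 := Gbar_tG_zero μ γ hγ hu
    have hfinal := heq u huTT
    rw [hG0, mul_zero, zero_add] at hfinal
    rw [← hu]
    have hIoc : IntegrableOn (fun x : ℝ≥0∞ => Hval μ γ L x.toNNReal) (Ioc 0 (u : ℝ≥0∞))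
        (μ.map γ) := (hH1.2 u huTT).mono_set Ioc_subset_Icc_self
    refine (endpoint_iff (μ.map γ) (t := (u : ℝ≥0∞)) (by rw [hu]; exact tG_pos μ γ hγ hpos)
      (fun x => Hval μ γ L x.toNNReal) hIoc (law_Ici_pos μ γ hγ huTT) ?_ F
      (F 0 * Gbar μ γ 0) ?_).2 hfinal
    · rw [← Gbar_eq μ γ hγ]; exact hG0
    · intro s hs
      rw [← Gbar_eq μ γ hγ]
      exact heq' s (by rw [← hu]; exact hs)
  · intro t ht
    refine (integrable_indicator_iff (hγ measurableSet_Iic)).2 ?_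
    exact (Lcent_spec hγ hLm measurableSet_Iic subset_rfl (hLint t ht)).1
  · filter_upwards [hLeq] with ω hω t
    split_ifs with ht
    · exact hF t ω ht
    · have ht' := not_lt.1 ht
      have hfin : γ ω ≠ ⊤ := (ht'.trans_lt ENNReal.coe_lt_top).ne
      rw [hω t ht']
      simp [Lcent, hfin, hLdef]

end ForwardTwo


section WithMeasurableSpace

variable [m : MeasurableSpace Ω]

/-- **Theorem 3.** A right-continuous process `M` is a local martingale w.r.t. the single
jump filtration iff it is adapted and, up to indistinguishability,
`M_t = F(t)·1_{t<γ} + (H(γ) + L')·1_{t≥γ}` for a pair `(F,H)` satisfying Condition M and a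
random variable `L'` with `E(|L'|·1_{γ≤t}) < ∞` for all `t ∈ 𝒯` and `E[L'|γ] = 0`. -/
theorem stmt_9 (μ : Measure Ω) [IsProbabilityMeasure μ] (γ : Ω → ℝ≥0∞)
    (hγ : Measurable γ) (hpos : 0 < μ {ω | 0 < γ ω})
    (M : ℝ≥0 → Ω → ℝ)
    (hrc : ∀ ω : Ω, ∀ t : ℝ≥0, ContinuousWithinAt (fun s => M s ω) (Ici t) t) :
    LocalMartingale μ γ M ↔
      ((∀ t : ℝ≥0, Measurable[jumpσ m γ t] (M t)) ∧
        ∃ F H : ℝ≥0 → ℝ, ∃ L' : Ω → ℝ,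
          Measurable L' ∧
          CondM μ γ F H ∧
          (∀ t ∈ TT μ γ,
            Integrable (fun ω => ({ω' | γ ω' ≤ (t : ℝ≥0∞)}.indicator L') ω) μ) ∧
          CondZeroGivenGamma μ γ L' ∧
          (∀ᵐ ω ∂μ, ∀ t : ℝ≥0,
            M t ω = if (t : ℝ≥0∞) < γ ω then F t else H (γ ω).toNNReal + L' ω)) := by
  constructor
  · exact fun h => ⟨h.1, forward hγ hpos hrc h⟩
  · rintro ⟨had, F, H, L', -, hF, hL, hL0, hrep⟩
    exact backward ⟨hγ, hpos, hF, hL, hL0, hrep⟩ hrc had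

end WithMeasurableSpace

end SingleJump
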